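/- arXiv:1511.07240 — 4 statements merged into one kernel-verified Lean document; each statement's English description precedes it below -/
import Mathlib

section
/- The supremum, over all measurable μ : ℂ → ℂ with |μ| ≤ 1 a.e. on the unit disk 𝔻 and μ = 0 outside 𝔻, of the asymptotic variance σ²(Sμ) — where Sμ(z) = -(1/π)∫_𝔻 μ(ζ)/(ζ−z)² dA(ζ) for |z| > 1 and σ²(g) := limsup_{R→1⁺} (1/(2π·log(1/(R−1)))) ∫₀^{2π} |g(R e^{iθ})|² R dθ — is equal to Σ²_ℍ, the supremum over all measurable ν : ℂ → ℂ with |ν| ≤ 1 a.e. on the lower half-plane {Im ζ < 0} and ν = 0 elsewhere, of σ²_{[0,1]}(S^#ν), where S^#ν(z) = -(1/π)∫_{Im ζ<0} ν(ζ)[(ζ−z)⁻² − ζ⁻²] dA(ζ) for Im z > 0 and σ²_{[0,1]}(b) := limsup_{y→0⁺} (1/log(1/y)) ∫₀¹ |b(x+iy)|² dx. -/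
open Complex MeasureTheory Filter Topology Set

/-- The derivative of the Beurling transform of `μ`:
`Tμ(z) = -(2/π) ∫_{Im ζ < 0} μ(ζ)/(ζ−z)³ dA(ζ)`. -/
noncomputable def Tderiv (μ : ℂ → ℂ) (z : ℂ) : ℂ :=
  -(2 / (Real.pi : ℂ)) * ∫ ζ in {ζ : ℂ | ζ.im < 0}, μ ζ / (ζ - z)^3

/-- The modified Beurling transform
`S^#μ(z) = -(1/π) ∫_{Im ζ<0} μ(ζ)[(ζ−z)⁻² − ζ⁻²] dA(ζ)`. -/
noncomputable def Ssharp (μ : ℂ → ℂ) (z : ℂ) : ℂ :=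
  -(1 / (Real.pi : ℂ)) * ∫ ζ in {ζ : ℂ | ζ.im < 0}, μ ζ * (((ζ - z)^2)⁻¹ - (ζ^2)⁻¹)

/-- The asymptotic variance over `[0,1]` of a function on the upper half-plane:
`σ²_{[0,1]}(b) = limsup_{y→0⁺} (1/log(1/y)) ∫₀¹ |b(x+iy)|² dx`. -/
noncomputable def sigma01 (b : ℂ → ℂ) : ℝ :=
  Filter.limsup (fun y : ℝ =>
    (1 / Real.log (1 / y)) *
      ∫ x in (0:ℝ)..1, ‖b ((x : ℂ) + (y : ℂ) * Complex.I)‖^2) (𝓝[>] (0:ℝ))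

/-- `Σ²_ℍ`: the supremum of `σ²_{[0,1]}(S^#μ)` over all measurable `μ` with
`|μ| ≤ 1` a.e. supported in the lower half-plane. -/
noncomputable def SigmaSqH : ℝ :=
  sSup {v : ℝ | ∃ μ : ℂ → ℂ, Measurable μ ∧ (∀ᵐ ζ : ℂ, ‖μ ζ‖ ≤ 1) ∧
    (∀ ζ : ℂ, 0 ≤ ζ.im → μ ζ = 0) ∧ v = sigma01 (Ssharp μ)}

/-- The Beurling transform of `μ` supported in the unit disk, for `|z| > 1`:
`Sμ(z) = -(1/π) ∫_𝔻 μ(ζ)/(ζ−z)² dA(ζ)`. -/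
noncomputable def Sdisk (μ : ℂ → ℂ) (z : ℂ) : ℂ :=
  -(1 / (Real.pi : ℂ)) * ∫ ζ in Metric.ball (0:ℂ) 1, μ ζ / (ζ - z)^2

/-- The asymptotic variance of a function on the exterior disk:
`σ²(g) = limsup_{R→1⁺} (1/(2π log(1/(R−1)))) ∫₀^{2π} |g(Re^{iθ})|² R dθ`. -/
noncomputable def sigmaDisk (g : ℂ → ℂ) : ℝ :=
  Filter.limsup (fun R : ℝ =>
    (1 / (2 * Real.pi * Real.log (1 / (R - 1)))) *
      ∫ θ in (0:ℝ)..(2 * Real.pi),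
        ‖g ((R : ℂ) * Complex.exp ((θ : ℂ) * Complex.I))‖^2 * R) (𝓝[>] (1:ℝ))

/-!
Both suprema are taken over the same set of asymptotic variances, those of the Beurling transforms
of functions `ν`, bounded by `1`, on a thin region under `[0, 1]`, the cusp
`0 < re w < 1`, `-(re w)² < im w < 0`.

Two functions whose difference at `x + iy` is bounded by `w(x)`, with `w` square integrable on
`(0, 1)`, have the same asymptotic variance, because the normalization `1 / log (1 / y)` tends to
`0`. On the half-plane, discarding everything outside the cusp costs `O((x (1 - x)) ^ (-1 / 4))`:
the discarded points are at distance at least `(x (1 - x))²` from `x + iy`, and the counterterm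
`ζ⁻²` is absolutely integrable over the cusp. On the disk, the covering `φ(w) = exp (-2πiw)`
unrolls the circle of radius `exp (2πy)` into the segment at height `y` and turns the kernel
`(ζ - z)⁻²` into one that differs from `(w - z)⁻²` by `O(|w - z|⁻¹)`, which is integrable in the
plane. Hence `Sμ ∘ φ` agrees, up to errors of the same kind, with the Beurling transform over the
cusp of the pullback `(μ ∘ φ) conj φ' / φ'`, and every bounded `ν` on the cusp is such a pullback.
-/

section Limsup

-- No boundedness is assumed: the two sets of eventual upper bounds are empty, or unbounded below,
-- together, so that the `limsup`s also agree when they are junk values.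
lemma limsup_eq_limsup_of_forall_lt {ι κ α : Type*} [ConditionallyCompleteLinearOrder α]
    [DenselyOrdered α] [NoMaxOrder α] {l : Filter ι} {l' : Filter κ} {f : ι → α} {g : κ → α}
    (hfg : ∀ c c', c < c' → (∀ᶠ i in l, f i ≤ c) → ∀ᶠ j in l', g j ≤ c')
    (hgf : ∀ c c', c < c' → (∀ᶠ j in l', g j ≤ c) → ∀ᶠ i in l, f i ≤ c') :
    limsup f l = limsup g l' := by
  rw [limsup_eq, limsup_eq]
  set S := {c | ∀ᶠ i in l, f i ≤ c}
  set T := {c | ∀ᶠ j in l', g j ≤ c}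
  have lowerBounds_eq : lowerBounds S = lowerBounds T := by
    ext b
    exact ⟨fun hb c hc ↦ le_of_forall_gt_imp_ge_of_dense fun c' hc' ↦ hb (hgf c c' hc' hc),
      fun hb c hc ↦ le_of_forall_gt_imp_ge_of_dense fun c' hc' ↦ hb (hfg c c' hc' hc)⟩
  have nonempty_iff : S.Nonempty ↔ T.Nonempty :=
    ⟨fun ⟨c, hc⟩ ↦ (exists_gt c).imp fun c' hc' ↦ hfg c c' hc' hc,
      fun ⟨c, hc⟩ ↦ (exists_gt c).imp fun c' hc' ↦ hgf c c' hc' hc⟩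
  have bddBelow_iff : BddBelow S ↔ BddBelow T := by rw [BddBelow, lowerBounds_eq, BddBelow]
  by_cases hS : S.Nonempty
  · by_cases hS' : BddBelow S
    · have hS_glb : IsGLB S (sInf T) := by
        rw [IsGLB, lowerBounds_eq]
        exact isGLB_csInf (nonempty_iff.1 hS) (bddBelow_iff.1 hS')
      exact hS_glb.csInf_eq hS
    · rw [csInf_of_not_bddBelow hS', csInf_of_not_bddBelow (mt bddBelow_iff.2 hS')]
  · rw [not_nonempty_iff_eq_empty.1 hS, not_nonempty_iff_eq_empty.1 (mt nonempty_iff.2 hS)]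

open scoped Asymptotics

lemma eventually_mul_sq_le_of_isEquivalent {ι : Type*} {l : Filter ι} {p r a b : ι → ℝ}
    {K c c' : ℝ} (hpr : p ~[l] r) (hr : Tendsto r l (𝓝[>] 0)) (ha : ∀ i, 0 ≤ a i)
    (hab : ∀ᶠ i in l, a i ≤ b i + K) (hcc' : c < c') (hb : ∀ᶠ i in l, r i * b i ^ 2 ≤ c) :
    ∀ᶠ i in l, p i * a i ^ 2 ≤ c' := by
  rcases l.eq_or_neBot with rfl | hl
  · exact eventually_bot
  have hr_pos : ∀ᶠ i in l, 0 < r i := hr.eventually self_mem_nhdsWithin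
  have hr_zero : Tendsto r l (𝓝 0) := hr.mono_right nhdsWithin_le_nhds
  have hc : 0 ≤ c := by
    obtain ⟨i, hri, hbi⟩ := (hr_pos.and hb).exists
    exact (by positivity : 0 ≤ r i * b i ^ 2).trans hbi
  obtain ⟨φ, hφ, hp⟩ := hpr.exists_eq_mul
  have bound_tendsto : Tendsto (fun i ↦ φ i * (√c + √(r i) * K) ^ 2) l (𝓝 c) := by
    have hlim : Tendsto (fun i ↦ φ i * (√c + √(r i) * K) ^ 2) l
        (𝓝 (1 * (√c + √0 * K) ^ 2)) :=
      hφ.mul (((hr_zero.sqrt.mul_const K).const_add √c).pow 2)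
    simpa [Real.sq_sqrt hc] using hlim
  filter_upwards [hr_pos, hb, hp, hab, bound_tendsto.eventually_le_const hcc',
    hφ.eventually_const_le zero_lt_one] with i hri hbi hpi habi hci hφi
  have sqrt_mul_b_le : √(r i) * b i ≤ √c := by
    apply Real.le_sqrt_of_sq_le
    rwa [mul_pow, Real.sq_sqrt hri.le]
  have sqrt_mul_a_le : √(r i) * a i ≤ √c + √(r i) * K := by
    nlinarith [mul_le_mul_of_nonneg_left habi (Real.sqrt_nonneg (r i))]
  have sqrt_mul_a_nonneg : 0 ≤ √(r i) * a i := mul_nonneg (Real.sqrt_nonneg _) (ha i)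
  calc p i * a i ^ 2 = φ i * (√(r i) * a i) ^ 2 := by
        rw [hpi, Pi.mul_apply, mul_pow, Real.sq_sqrt hri.le, mul_assoc]
    _ ≤ φ i * (√c + √(r i) * K) ^ 2 := by gcongr
    _ ≤ c' := hci

lemma limsup_mul_sq_eq_of_isEquivalent {ι : Type*} {l : Filter ι} {p r a b : ι → ℝ} {K : ℝ}
    (hpr : p ~[l] r) (hr : Tendsto r l (𝓝[>] 0)) (ha : ∀ i, 0 ≤ a i) (hb : ∀ i, 0 ≤ b i)
    (hab : ∀ᶠ i in l, |a i - b i| ≤ K) :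
    limsup (fun i ↦ p i * a i ^ 2) l = limsup (fun i ↦ r i * b i ^ 2) l := by
  have hp : Tendsto p l (𝓝[>] 0) := by
    refine tendsto_nhdsWithin_iff.2
      ⟨hpr.symm.tendsto_nhds (hr.mono_right nhdsWithin_le_nhds), ?_⟩
    obtain ⟨φ, hφ, hp⟩ := hpr.exists_eq_mul
    filter_upwards [hp, hφ.eventually_const_lt zero_lt_one,
      hr.eventually self_mem_nhdsWithin] with i hpi hφi hri
    rw [hpi]
    exact mul_pos hφi hri
  have hab_le : ∀ᶠ i in l, a i ≤ b i + K := hab.mono fun i hi ↦ by linarith [abs_le.1 hi]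
  have hba_le : ∀ᶠ i in l, b i ≤ a i + K := hab.mono fun i hi ↦ by linarith [abs_le.1 hi]
  exact limsup_eq_limsup_of_forall_lt
    (fun c c' ↦ eventually_mul_sq_le_of_isEquivalent hpr.symm hp hb hba_le)
    (fun c c' ↦ eventually_mul_sq_le_of_isEquivalent hpr hr ha hab_le)

end Limsup

section LpNorm

variable {α E : Type*} {m : MeasurableSpace α} {μ : Measure α} [NormedAddCommGroup E]

open scoped ENNReal

lemma abs_lpNorm_sub_lpNorm_le {p : ℝ≥0∞} (hp : 1 ≤ p) {f g : α → E}
    (hfg : MemLp (f - g) p μ) : |lpNorm f p μ - lpNorm g p μ| ≤ lpNorm (f - g) p μ := by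
  by_cases hg : MemLp g p μ
  · have hf : MemLp f p μ := by simpa using hfg.add hg
    rw [abs_sub_le_iff]
    constructor
    · linarith [lpNorm_le_lpNorm_add_lpNorm_sub' (f := f) hg hp]
    · linarith [lpNorm_le_lpNorm_add_lpNorm_sub (f := g) hf hp]
  · have hf : ¬ MemLp f p μ := fun hf ↦ hg (by simpa using hf.sub hfg)
    simp [lpNorm_of_not_memLp hf, lpNorm_of_not_memLp hg]

lemma sq_lpNorm_two {f : α → E} (hf : AEStronglyMeasurable f μ) :
    lpNorm f 2 μ ^ 2 = ∫ x, ‖f x‖ ^ 2 ∂μ := by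
  have h_nonneg : 0 ≤ ∫ x, ‖f x‖ ^ 2 ∂μ := integral_nonneg fun x ↦ sq_nonneg _
  rw [lpNorm_eq_integral_norm_rpow_toReal two_ne_zero ENNReal.ofNat_ne_top hf,
    ENNReal.toReal_ofNat, ← Real.rpow_natCast, ← Real.rpow_mul (by simpa using h_nonneg)]
  simp

lemma abs_lpNorm_sub_lpNorm_le_of_norm_le {p : ℝ≥0∞} (hp : 1 ≤ p) {f g : α → E} {w : α → ℝ}
    (hf : AEStronglyMeasurable f μ) (hg : AEStronglyMeasurable g μ) (hw : MemLp w p μ)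
    (hfg : ∀ᵐ x ∂μ, ‖f x - g x‖ ≤ w x) :
    |lpNorm f p μ - lpNorm g p μ| ≤ lpNorm w p μ := by
  have hsub : MemLp (f - g) p μ :=
    hw.mono (hf.sub hg) (hfg.mono fun x hx ↦ hx.trans (le_abs_self _))
  refine (abs_lpNorm_sub_lpNorm_le hp hsub).trans ?_
  rw [← toReal_eLpNorm hsub.1, ← toReal_eLpNorm hw.1]
  exact ENNReal.toReal_mono hw.2.ne
    (eLpNorm_mono_ae (hfg.mono fun x hx ↦ hx.trans (le_abs_self _)))

end LpNorm

section AsymptoticVariance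

open scoped Asymptotics ENNReal

lemma tendsto_one_div_log_one_div :
    Tendsto (fun y : ℝ ↦ 1 / Real.log (1 / y)) (𝓝[>] 0) (𝓝[>] 0) := by
  simpa [Function.comp_def] using
    tendsto_inv_atTop_nhdsGT_zero.comp
      (Real.tendsto_log_atTop.comp tendsto_inv_nhdsGT_zero)

lemma map_exp_mul_nhdsGT_zero {c : ℝ} (hc : 0 < c) :
    map (fun y : ℝ ↦ Real.exp (c * y)) (𝓝[>] 0) = 𝓝[>] 1 := by
  have h_mul : map (fun y : ℝ ↦ c * y) (𝓝[>] 0) = 𝓝[>] 0 := by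
    have h := (Homeomorph.mulLeft₀ c hc.ne').isEmbedding.map_nhdsWithin_eq (Ioi 0) 0
    simpa [image_mul_left_Ioi hc] using h
  have h_exp : map Real.exp (𝓝[>] 0) = 𝓝[>] 1 := by
    have h := Real.isOpenEmbedding_exp.isEmbedding.map_nhdsWithin_eq (Ioi 0) 0
    rw [Real.exp_zero] at h
    rw [h]
    congr 1
    ext t
    constructor
    · rintro ⟨s, hs, rfl⟩
      exact Real.one_lt_exp_iff.2 hs
    · intro ht
      exact ⟨Real.log t, Real.log_pos ht, Real.exp_log (zero_lt_one.trans ht)⟩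
  conv_rhs => rw [← h_exp, ← h_mul, map_map]
  rfl

lemma isEquivalent_log_one_div_exp_mul_sub_one {c : ℝ} (hc : 0 < c) :
    (fun y : ℝ ↦ Real.log (1 / (Real.exp (c * y) - 1))) ~[𝓝[>] 0]
      fun y ↦ Real.log (1 / y) := by
  have slope_tendsto : Tendsto (fun y : ℝ ↦ (Real.exp (c * y) - 1) / y) (𝓝[>] 0) (𝓝 c) := by
    have h_deriv : HasDerivAt (fun y : ℝ ↦ Real.exp (c * y)) c 0 := by
      simpa using ((hasDerivAt_id (0 : ℝ)).const_mul c).exp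
    refine (h_deriv.tendsto_slope_zero_right).congr fun y ↦ ?_
    simp [div_eq_inv_mul]
  have log_slope_isLittleO : (fun y : ℝ ↦ Real.log ((Real.exp (c * y) - 1) / y))
      =o[𝓝[>] 0] fun y ↦ Real.log (1 / y) := by
    refine (slope_tendsto.log hc.ne').isBigO_one ℝ |>.trans_isLittleO ?_
    rw [Asymptotics.isLittleO_one_left_iff]
    refine tendsto_norm_atTop_atTop.comp ?_
    simpa [Function.comp_def] using Real.tendsto_log_atTop.comp tendsto_inv_nhdsGT_zero
  refine (log_slope_isLittleO.neg_left).congr' ?_ EventuallyEq.rfl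
  filter_upwards [self_mem_nhdsWithin] with y (hy : 0 < y)
  have h_exp : 0 < Real.exp (c * y) - 1 := sub_pos.2 (Real.one_lt_exp_iff.2 (by positivity))
  simp only [Real.log_div h_exp.ne' hy.ne', one_div, Real.log_inv, Pi.sub_apply]
  ring

lemma isEquivalent_exp_mul_div_log {c : ℝ} (hc : 0 < c) :
    (fun y : ℝ ↦ Real.exp (c * y) / Real.log (1 / (Real.exp (c * y) - 1))) ~[𝓝[>] 0]
      fun y ↦ 1 / Real.log (1 / y) := by
  refine Asymptotics.IsEquivalent.div ?_ (isEquivalent_log_one_div_exp_mul_sub_one hc)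
  refine (Asymptotics.isEquivalent_const_iff_tendsto one_ne_zero).2 ?_
  have h : Continuous fun y : ℝ ↦ Real.exp (c * y) := by fun_prop
  simpa using (h.tendsto 0).mono_left nhdsWithin_le_nhds

lemma sigma01_eq_limsup_lpNorm {b : ℂ → ℂ} (hb : Measurable b) :
    sigma01 b = limsup (fun y : ℝ ↦ 1 / Real.log (1 / y) *
      lpNorm (fun x : ℝ ↦ b (x + y * I)) 2 (volume.restrict (Ioo 0 1)) ^ 2) (𝓝[>] 0) := by
  refine congrArg (limsup · (𝓝[>] 0)) (funext fun y ↦ ?_)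
  have h_meas : Measurable fun x : ℝ ↦ b (x + y * I) := hb.comp (by fun_prop)
  rw [sq_lpNorm_two h_meas.aestronglyMeasurable, intervalIntegral.integral_of_le zero_le_one,
    integral_Ioc_eq_integral_Ioo]

/-- The covering `w ↦ e^{-2πiw}` of `ℂ ∖ {0}`. It carries the lower half-plane to the punctured
unit disk, the upper half-plane to the exterior disk, and unrolls the circle of radius `e^{2πy}`
into the horizontal line at height `y`. -/
noncomputable def expCover (w : ℂ) : ℂ := Complex.exp (-(2 * Real.pi * I) * w)

@[fun_prop]
lemma measurable_expCover : Measurable expCover := by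
  unfold expCover
  fun_prop

lemma integral_circle_eq_integral_expCover (g : ℂ → ℂ) (y : ℝ) :
    ∫ θ in (0 : ℝ)..2 * Real.pi,
        ‖g (Real.exp (2 * Real.pi * y) * Complex.exp (θ * I))‖ ^ 2 * Real.exp (2 * Real.pi * y) =
      2 * Real.pi * Real.exp (2 * Real.pi * y) *
        ∫ x in (0 : ℝ)..1, ‖g (expCover (x + y * I))‖ ^ 2 := by
  have expCover_eq (x : ℝ) : expCover (x + y * I) =
      Real.exp (2 * Real.pi * y) *
        Complex.exp (((2 * Real.pi - 2 * Real.pi * x : ℝ) : ℂ) * I) := by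
    rw [expCover, ofReal_exp, ← Complex.exp_add]
    refine Complex.exp_eq_exp_iff_exists_int.2 ⟨-1, ?_⟩
    push_cast
    linear_combination (-(2 * Real.pi * y) : ℂ) * I_sq
  simp_rw [expCover_eq]
  rw [intervalIntegral.integral_mul_const, intervalIntegral.integral_comp_sub_mul
    (fun θ : ℝ ↦ ‖g (Real.exp (2 * Real.pi * y) * Complex.exp (θ * I))‖ ^ 2) Real.two_pi_pos.ne']
  simp only [mul_one, mul_zero, sub_self, sub_zero, smul_eq_mul]
  generalize Real.exp (2 * Real.pi * y) = R
  rw [mul_right_comm (2 * Real.pi), mul_inv_cancel_left₀ Real.two_pi_pos.ne']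

lemma sigmaDisk_eq_limsup_lpNorm {g : ℂ → ℂ} (hg : Measurable g) :
    sigmaDisk g = limsup (fun y : ℝ ↦
      Real.exp (2 * Real.pi * y) / Real.log (1 / (Real.exp (2 * Real.pi * y) - 1)) *
        lpNorm (fun x : ℝ ↦ g (expCover (x + y * I))) 2 (volume.restrict (Ioo 0 1)) ^ 2)
      (𝓝[>] 0) := by
  rw [sigmaDisk, ← map_exp_mul_nhdsGT_zero Real.two_pi_pos, limsup, map_map]
  refine congrArg (limsup · (𝓝[>] 0)) (funext fun y ↦ ?_)
  have h_meas : Measurable fun x : ℝ ↦ g (expCover (x + y * I)) := hg.comp (by fun_prop)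
  rw [sq_lpNorm_two h_meas.aestronglyMeasurable, Function.comp_apply,
    integral_circle_eq_integral_expCover, intervalIntegral.integral_of_le zero_le_one,
    integral_Ioc_eq_integral_Ioo]
  field_simp

section Comparison

variable {g b b' : ℂ → ℂ} {w : ℝ → ℝ}

lemma eventually_abs_lpNorm_sub_lpNorm_le {F G : ℝ → ℝ → ℂ} (hF : ∀ y, Measurable (F y))
    (hG : ∀ y, Measurable (G y)) (hw : MemLp w 2 (volume.restrict (Ioo 0 1)))
    (h : ∀ x ∈ Ioo (0 : ℝ) 1, ∀ y ∈ Ioo (0 : ℝ) 1, ‖F y x - G y x‖ ≤ w x) :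
    ∀ᶠ y in 𝓝[>] (0 : ℝ), |lpNorm (F y) 2 (volume.restrict (Ioo 0 1)) -
      lpNorm (G y) 2 (volume.restrict (Ioo 0 1))| ≤ lpNorm w 2 (volume.restrict (Ioo 0 1)) :=
  eventually_of_mem (Ioo_mem_nhdsGT zero_lt_one) fun y hy ↦
    abs_lpNorm_sub_lpNorm_le_of_norm_le one_le_two (hF y).aestronglyMeasurable
      (hG y).aestronglyMeasurable hw
      (ae_restrict_of_forall_mem measurableSet_Ioo fun x hx ↦ h x hx y hy)

lemma sigma01_congr_of_norm_sub_le (hb : Measurable b) (hb' : Measurable b')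
    (hw : MemLp w 2 (volume.restrict (Ioo 0 1)))
    (h : ∀ x ∈ Ioo (0 : ℝ) 1, ∀ y ∈ Ioo (0 : ℝ) 1, ‖b (x + y * I) - b' (x + y * I)‖ ≤ w x) :
    sigma01 b = sigma01 b' := by
  rw [sigma01_eq_limsup_lpNorm hb, sigma01_eq_limsup_lpNorm hb']
  exact limsup_mul_sq_eq_of_isEquivalent .refl tendsto_one_div_log_one_div
    (fun _ ↦ lpNorm_nonneg) (fun _ ↦ lpNorm_nonneg)
    (eventually_abs_lpNorm_sub_lpNorm_le (fun _ ↦ hb.comp (by fun_prop))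
      (fun _ ↦ hb'.comp (by fun_prop)) hw h)

lemma sigmaDisk_eq_sigma01_of_norm_sub_le (hg : Measurable g) (hb : Measurable b)
    (hw : MemLp w 2 (volume.restrict (Ioo 0 1)))
    (h : ∀ x ∈ Ioo (0 : ℝ) 1, ∀ y ∈ Ioo (0 : ℝ) 1,
      ‖g (expCover (x + y * I)) - b (x + y * I)‖ ≤ w x) :
    sigmaDisk g = sigma01 b := by
  rw [sigmaDisk_eq_limsup_lpNorm hg, sigma01_eq_limsup_lpNorm hb]
  exact limsup_mul_sq_eq_of_isEquivalent (isEquivalent_exp_mul_div_log Real.two_pi_pos)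
    tendsto_one_div_log_one_div (fun _ ↦ lpNorm_nonneg) (fun _ ↦ lpNorm_nonneg)
    (eventually_abs_lpNorm_sub_lpNorm_le (fun _ ↦ hg.comp (by fun_prop))
      (fun _ ↦ hb.comp (by fun_prop)) hw h)

end Comparison

end AsymptoticVariance

section SingularIntegrals

variable {E : Type*} [NormedAddCommGroup E] [NormedSpace ℝ E] [FiniteDimensional ℝ E]
  [MeasurableSpace E] [BorelSpace E] {μ : Measure E} [μ.IsAddHaarMeasure]

lemma integrableOn_ball_norm_rpow [Nontrivial E] {r : ℝ} (hr : -(Module.finrank ℝ E) < r)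
    (R : ℝ) : IntegrableOn (fun u : E ↦ ‖u‖ ^ r) (Metric.ball 0 R) μ := by
  rw [integrableOn_fun_norm_addHaar μ (f := fun t : ℝ ↦ t ^ r)]
  rcases le_or_gt R 0 with hR | hR
  · simp [Ioo_eq_empty hR.not_gt]
  have hd : 1 ≤ Module.finrank ℝ E := Module.finrank_pos
  have h_exp : -1 < ((Module.finrank ℝ E - 1 : ℕ) : ℝ) + r := by
    push_cast [Nat.cast_sub hd]
    linarith
  refine ((intervalIntegral.integrableOn_Ioo_rpow_iff hR).2 h_exp).congr_fun (fun t ht ↦ ?_)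
    measurableSet_Ioo
  simp only [smul_eq_mul]
  rw [Real.rpow_add ht.1, Real.rpow_natCast]

lemma norm_setIntegral_le_of_norm_le_mul_norm_rpow [Nontrivial E] {F : Type*}
    [NormedAddCommGroup F] [NormedSpace ℝ F] {f : E → F} {s : Set E} (hs : MeasurableSet s)
    {a : E} {R c r : ℝ} (hr : -(Module.finrank ℝ E) < r) (hc : 0 ≤ c)
    (hsub : s ⊆ Metric.ball a R) (hf : ∀ u ∈ s, ‖f u‖ ≤ c * ‖u - a‖ ^ r) :
    ‖∫ u in s, f u ∂μ‖ ≤ c * ∫ u in Metric.ball 0 R, ‖u‖ ^ r ∂μ := by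
  set k : E → ℝ := (Metric.ball 0 R).indicator fun u ↦ ‖u‖ ^ r
  have k_nonneg (u : E) : 0 ≤ k u := indicator_nonneg (fun _ _ ↦ by positivity) u
  have k_integrable : Integrable (fun u ↦ k (u - a)) μ :=
    ((integrable_indicator_iff measurableSet_ball).2
      (integrableOn_ball_norm_rpow hr R)).comp_sub_right a
  have norm_le_k : ∀ u ∈ s, ‖f u‖ ≤ c * k (u - a) := fun u hu ↦ by
    have hu' : u - a ∈ Metric.ball 0 R := by simpa [dist_eq_norm] using hsub hu
    simpa only [k, indicator_of_mem hu'] using hf u hu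
  calc ‖∫ u in s, f u ∂μ‖ ≤ ∫ u in s, c * k (u - a) ∂μ :=
        norm_integral_le_of_norm_le (k_integrable.const_mul c).integrableOn
          (ae_restrict_of_forall_mem hs norm_le_k)
    _ ≤ ∫ u, c * k (u - a) ∂μ :=
        setIntegral_le_integral (k_integrable.const_mul c)
          (.of_forall fun u ↦ mul_nonneg hc (k_nonneg _))
    _ = c * ∫ u in Metric.ball 0 R, ‖u‖ ^ r ∂μ := by
        rw [integral_const_mul, integral_sub_right_eq_self k, integral_indicator measurableSet_ball]

end SingularIntegrals

section BeurlingOn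

/-- The Beurling transform of the restriction of `μ` to `s`, as an absolutely convergent integral
away from `s`. -/
noncomputable def beurlingOn (s : Set ℂ) (μ : ℂ → ℂ) (z : ℂ) : ℂ :=
  -(1 / (Real.pi : ℂ)) * ∫ ζ in s, μ ζ / (ζ - z) ^ 2

variable {s : Set ℂ} {μ : ℂ → ℂ} {z : ℂ}

lemma measurable_const_mul_setIntegral (s : Set ℂ) (c : ℂ) {k : ℂ → ℂ → ℂ}
    (hk : Measurable (Function.uncurry k)) : Measurable fun z ↦ c * ∫ ζ in s, k z ζ := by
  have h : StronglyMeasurable fun z ↦ ∫ ζ in s, k z ζ := hk.stronglyMeasurable.integral_prod_right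
  exact h.measurable.const_mul c

lemma measurable_beurlingOn (s : Set ℂ) (hμ : Measurable μ) : Measurable (beurlingOn s μ) :=
  measurable_const_mul_setIntegral s _ (k := fun z ζ ↦ μ ζ / (ζ - z) ^ 2)
    (by unfold Function.uncurry; fun_prop)

lemma measurable_Ssharp (hμ : Measurable μ) : Measurable (Ssharp μ) :=
  measurable_const_mul_setIntegral _ _ (k := fun z ζ ↦ μ ζ * (((ζ - z) ^ 2)⁻¹ - (ζ ^ 2)⁻¹))
    (by unfold Function.uncurry; fun_prop)

lemma beurlingOn_congr (hs : MeasurableSet s) {μ' : ℂ → ℂ} (h : EqOn μ μ' s) :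
    beurlingOn s μ = beurlingOn s μ' := by
  ext z
  rw [beurlingOn, setIntegral_congr_fun hs fun ζ hζ ↦ by rw [h hζ], beurlingOn]

lemma norm_div_sq_le (hμ : ∀ w, ‖μ w‖ ≤ 1) (ζ z : ℂ) :
    ‖μ ζ / (ζ - z) ^ 2‖ ≤ (‖ζ - z‖ ^ 2)⁻¹ := by
  rw [norm_div, norm_pow, div_eq_mul_inv]
  exact mul_le_of_le_one_left (by positivity) (hμ ζ)

lemma integrableOn_div_sq (hμ : Measurable μ) (hμ_le : ∀ w, ‖μ w‖ ≤ 1) (hs : MeasurableSet s)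
    (hs_fin : volume s ≠ ⊤) {δ : ℝ} (hδ : 0 < δ) (hdist : ∀ ζ ∈ s, δ ≤ ‖ζ - z‖) :
    IntegrableOn (fun ζ ↦ μ ζ / (ζ - z) ^ 2) s := by
  refine Measure.integrableOn_of_bounded (M := (δ ^ 2)⁻¹) hs_fin
    (Measurable.aestronglyMeasurable (by fun_prop))
    (ae_restrict_of_forall_mem hs fun ζ hζ ↦ (norm_div_sq_le hμ_le ζ z).trans ?_)
  have := hdist ζ hζ
  gcongr

end BeurlingOn

section EdgeWeight

/-- A weight on `(0, 1)`, square integrable and blowing up at the endpoints; it absorbs the growth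
of the comparison errors as the point of evaluation approaches a vertical edge of the cusp. -/
noncomputable def edgeWeight (x : ℝ) : ℝ := (x * (1 - x)) ^ (-(1 / 4) : ℝ)

lemma memLp_edgeWeight : MemLp edgeWeight 2 (volume.restrict (Ioo 0 1)) := by
  have h_meas : Measurable edgeWeight := by unfold edgeWeight; fun_prop
  rw [memLp_two_iff_integrable_sq h_meas.aestronglyMeasurable]
  have h_beta : IntervalIntegrable (fun x : ℝ ↦
      (x : ℂ) ^ ((1 / 2 : ℂ) - 1) * (1 - (x : ℂ)) ^ ((1 / 2 : ℂ) - 1)) volume 0 1 :=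
    betaIntegral_convergent (by norm_num) (by norm_num)
  rw [intervalIntegrable_iff_integrableOn_Ioo_of_le zero_le_one] at h_beta
  refine IntegrableOn.congr_fun (f := fun x : ℝ ↦
    ‖(x : ℂ) ^ ((1 / 2 : ℂ) - 1) * (1 - (x : ℂ)) ^ ((1 / 2 : ℂ) - 1)‖) h_beta.norm
    (fun x ⟨hx0, hx1⟩ ↦ ?_) measurableSet_Ioo
  have hx1' : 0 < 1 - x := sub_pos.2 hx1
  have norm_one_sub : ‖(1 - (x : ℂ)) ^ ((1 / 2 : ℂ) - 1)‖ = (1 - x) ^ (-(1 / 2) : ℝ) := by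
    rw [← ofReal_one, ← ofReal_sub, norm_cpow_eq_rpow_re_of_pos hx1']
    norm_num
  simp only [norm_mul, norm_one_sub, norm_cpow_eq_rpow_re_of_pos hx0, edgeWeight]
  rw [← Real.rpow_natCast, ← Real.rpow_mul (by positivity), Real.mul_rpow hx0.le hx1'.le]
  norm_num

lemma memLp_edgeWeight_affine (A B : ℝ) :
    MemLp (fun x ↦ A * edgeWeight x + B) 2 (volume.restrict (Ioo 0 1)) :=
  (memLp_edgeWeight.const_mul A).add (memLp_const B)

lemma inv_sq_le_edgeWeight_mul {x d : ℝ} (hx : x ∈ Ioo 0 1) (hd : (x * (1 - x)) ^ 2 ≤ d) :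
    (d ^ 2)⁻¹ ≤ edgeWeight x * d ^ (-(15 / 8) : ℝ) := by
  have hρ : 0 < x * (1 - x) := mul_pos hx.1 (sub_pos.2 hx.2)
  have hd_pos : 0 < d := (pow_pos hρ 2).trans_le hd
  have edgeWeight_eq : edgeWeight x = ((x * (1 - x)) ^ 2) ^ (-(1 / 8) : ℝ) := by
    rw [edgeWeight, ← Real.rpow_natCast, ← Real.rpow_mul hρ.le]
    norm_num
  calc (d ^ 2)⁻¹ = d ^ (-(1 / 8) : ℝ) * d ^ (-(15 / 8) : ℝ) := by
        rw [← Real.rpow_natCast, ← Real.rpow_neg hd_pos.le, ← Real.rpow_add hd_pos]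
        norm_num
    _ ≤ edgeWeight x * d ^ (-(15 / 8) : ℝ) := by
        rw [edgeWeight_eq]
        gcongr ?_ * _
        exact Real.rpow_le_rpow_of_nonpos (pow_pos hρ 2) hd (by norm_num)

lemma norm_setIntegral_div_sq_le {s : Set ℂ} (hs : MeasurableSet s) {μ : ℂ → ℂ}
    (hμ : ∀ w, ‖μ w‖ ≤ 1) {x : ℝ} (hx : x ∈ Ioo 0 1) {z : ℂ} {R : ℝ} (hsub : s ⊆ Metric.ball z R)
    (hdist : ∀ ζ ∈ s, (x * (1 - x)) ^ 2 ≤ ‖ζ - z‖) :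
    ‖∫ ζ in s, μ ζ / (ζ - z) ^ 2‖ ≤
      edgeWeight x * ∫ u in Metric.ball (0 : ℂ) R, ‖u‖ ^ (-(15 / 8) : ℝ) :=
  norm_setIntegral_le_of_norm_le_mul_norm_rpow hs (by norm_num [finrank_real_complex])
    (Real.rpow_nonneg (mul_nonneg hx.1.le (sub_nonneg.2 hx.2.le)) _) hsub
    fun ζ hζ ↦ (norm_div_sq_le hμ ζ z).trans (inv_sq_le_edgeWeight_mul hx (hdist ζ hζ))

end EdgeWeight

section Cusp

/-- The open region under `[0, 1]` bounded below by the parabola `im w = -(re w)²`. It is thin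
enough at `0` for `‖w‖⁻²` to be integrable over it, and large enough for the rest of the lower
half-plane to stay at distance `(x (1 - x))²` from the points above `x ∈ (0, 1)`. -/
def cusp : Set ℂ := {w | w.re ∈ Ioo 0 1 ∧ w.im ∈ Ioo (-w.re ^ 2) 0}

lemma measurableSet_cusp : MeasurableSet cusp := by
  have h : IsOpen cusp :=
    (isOpen_Ioo.preimage continuous_re).inter
      ((isOpen_lt (by fun_prop) continuous_im).inter (isOpen_lt continuous_im continuous_const))
  exact h.measurableSet

lemma im_neg_of_mem_cusp {w : ℂ} (hw : w ∈ cusp) : w.im < 0 := hw.2.2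

lemma cusp_subset_ball : cusp ⊆ Metric.ball 0 2 := by
  rintro w ⟨⟨h0, h1⟩, h2, h3⟩
  rw [mem_ball_zero_iff]
  have h := norm_le_abs_re_add_abs_im w
  rw [abs_of_pos h0, abs_of_neg h3] at h
  nlinarith

lemma volume_cusp_ne_top : volume cusp ≠ ⊤ :=
  ((measure_mono cusp_subset_ball).trans_lt measure_ball_lt_top).ne

lemma inv_sq_norm_le_of_mem_cusp {w : ℂ} (hw : w ∈ cusp) :
    (‖w‖ ^ 2)⁻¹ ≤ w.re ^ (-(1 / 2) : ℝ) * (-w.im) ^ (-(3 / 4) : ℝ) := by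
  obtain ⟨⟨re_pos, -⟩, im_gt, im_neg⟩ := hw
  calc (‖w‖ ^ 2)⁻¹ ≤ (w.re ^ 2)⁻¹ := by
        gcongr
        exact re_le_norm w
    _ = w.re ^ (-(1 / 2) : ℝ) * (w.re ^ 2) ^ (-(3 / 4) : ℝ) := by
        rw [← Real.rpow_natCast, ← Real.rpow_mul re_pos.le, ← Real.rpow_neg re_pos.le,
          ← Real.rpow_add re_pos]
        norm_num
    _ ≤ w.re ^ (-(1 / 2) : ℝ) * (-w.im) ^ (-(3 / 4) : ℝ) := by
        gcongr _ * ?_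
        exact Real.rpow_le_rpow_of_nonpos (by linarith) (by linarith) (by norm_num)

lemma integrableOn_cusp_inv_sq_norm : IntegrableOn (fun w : ℂ ↦ (‖w‖ ^ 2)⁻¹) cusp := by
  have h_rpow {r : ℝ} (hr : -1 < r) : IntegrableOn (fun t : ℝ ↦ t ^ r) (Ioo 0 1) :=
    (intervalIntegral.integrableOn_Ioo_rpow_iff one_pos).2 hr
  have h_re := (h_rpow (r := -(1 / 2)) (by norm_num)).integrable_indicator measurableSet_Ioo
  have h_im := ((h_rpow (r := -(3 / 4)) (by norm_num)).integrable_indicator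
    measurableSet_Ioo).comp_neg
  have h_prod := (volume_preserving_equiv_real_prod.integrable_comp_emb
    measurableEquivRealProd.measurableEmbedding).2 (h_re.mul_prod h_im)
  refine Integrable.mono' h_prod.integrableOn (Measurable.aestronglyMeasurable (by fun_prop))
    (ae_restrict_of_forall_mem measurableSet_cusp fun w hw ↦ ?_)
  have h_mem : -w.im ∈ Ioo (0 : ℝ) 1 :=
    ⟨by linarith [hw.2.2], by nlinarith [hw.1.1, hw.1.2, hw.2.1]⟩
  rw [Real.norm_of_nonneg (by positivity)]
  simpa [indicator_of_mem hw.1, indicator_of_mem h_mem] using inv_sq_norm_le_of_mem_cusp hw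

lemma sq_le_norm_sub_of_notMem_cusp {ζ z : ℂ} (hζ : ζ.im < 0) (hζ_cusp : ζ ∉ cusp)
    (hz : z.re ∈ Ioo 0 1) (hz_im : 0 < z.im) : (z.re * (1 - z.re)) ^ 2 ≤ ‖ζ - z‖ := by
  obtain ⟨hz0, hz1⟩ := hz
  have re_le := (abs_le.1 (abs_re_le_norm (ζ - z)))
  have im_le := (abs_le.1 (abs_im_le_norm (ζ - z))).1
  rw [sub_re] at re_le
  rw [sub_im] at im_le
  set x := z.re
  have hρ : 0 < x * (1 - x) := mul_pos hz0 (sub_pos.2 hz1)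
  have hρ_le_one_sub : x * (1 - x) ≤ 1 - x := by nlinarith
  have hρ_sq : (x * (1 - x)) ^ 2 ≤ x * (1 - x) := by nlinarith
  have hρ_sq' : (x * (1 - x)) ^ 2 ≤ x ^ 2 := by gcongr; nlinarith
  rcases le_or_gt ζ.re (x * (1 - x)) with h_left | h_left
  · nlinarith
  rcases le_or_gt 1 ζ.re with h_right | h_right
  · linarith
  have h_below : ζ.im ≤ -ζ.re ^ 2 := by
    by_contra! h
    exact hζ_cusp ⟨⟨hρ.trans h_left, h_right⟩, h, hζ⟩
  nlinarith

end Cusp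

section HalfPlane

variable {ν : ℂ → ℂ} {z ζ : ℂ}

lemma norm_inv_sq_sub_inv_sq_le (h : 2 * ‖z‖ ≤ ‖ζ‖) :
    ‖((ζ - z) ^ 2)⁻¹ - (ζ ^ 2)⁻¹‖ ≤ 6 * ‖z‖ * ‖ζ‖⁻¹ ^ 3 := by
  rcases eq_or_ne ζ 0 with rfl | hζ
  · have hz : z = 0 := norm_le_zero_iff.1 (by linarith [h, norm_zero (E := ℂ)])
    simp [hz]
  have hζ_pos : 0 < ‖ζ‖ := norm_pos_iff.2 hζ
  have half_le : ‖ζ‖ / 2 ≤ ‖ζ - z‖ := by linarith [norm_sub_norm_le ζ z]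
  have hζz : ζ - z ≠ 0 := norm_pos_iff.1 ((half_pos hζ_pos).trans_le half_le)
  have inv_le : ‖ζ - z‖⁻¹ ≤ 2 * ‖ζ‖⁻¹ := by
    rw [← div_eq_mul_inv, ← inv_div]
    exact inv_anti₀ (half_pos hζ_pos) half_le
  have factor : ((ζ - z) ^ 2)⁻¹ - (ζ ^ 2)⁻¹ =
      z * (ζ⁻¹ * (ζ - z)⁻¹ ^ 2 + ζ⁻¹ ^ 2 * (ζ - z)⁻¹) := by
    field_simp
    ring
  calc ‖((ζ - z) ^ 2)⁻¹ - (ζ ^ 2)⁻¹‖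
      ≤ ‖z‖ * (‖ζ‖⁻¹ * ‖ζ - z‖⁻¹ ^ 2 + ‖ζ‖⁻¹ ^ 2 * ‖ζ - z‖⁻¹) := by
        rw [factor, norm_mul]
        gcongr
        refine (norm_add_le _ _).trans_eq ?_
        simp only [norm_mul, norm_pow, norm_inv]
    _ ≤ ‖z‖ * (‖ζ‖⁻¹ * (2 * ‖ζ‖⁻¹) ^ 2 + ‖ζ‖⁻¹ ^ 2 * (2 * ‖ζ‖⁻¹)) := by gcongr
    _ = 6 * ‖z‖ * ‖ζ‖⁻¹ ^ 3 := by ring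

lemma measurableSet_im_neg : MeasurableSet {ζ : ℂ | ζ.im < 0} :=
  (isOpen_lt continuous_im continuous_const).measurableSet

lemma integrable_one_add_norm_rpow_neg_three : Integrable fun ζ : ℂ ↦ (1 + ‖ζ‖) ^ (-3 : ℝ) :=
  integrable_one_add_norm (by norm_num [finrank_real_complex])

/-- The part of the lower half-plane near the unit interval. The radius `4` ensures `2 * ‖z‖ ≤ ‖ζ‖`
for `ζ` in the rest of the lower half-plane and `z ∈ (0, 1) × (0, 1)`. -/
def lowerHalfDisk : Set ℂ := {ζ | ζ.im < 0} ∩ Metric.ball 0 4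

lemma measurableSet_lowerHalfDisk : MeasurableSet lowerHalfDisk :=
  measurableSet_im_neg.inter measurableSet_ball

lemma volume_lowerHalfDisk_ne_top : volume lowerHalfDisk ≠ ⊤ :=
  ((measure_mono inter_subset_right).trans_lt measure_ball_lt_top).ne

lemma cusp_subset_lowerHalfDisk : cusp ⊆ lowerHalfDisk := fun _ hw ↦
  ⟨im_neg_of_mem_cusp hw, Metric.ball_subset_ball (by norm_num) (cusp_subset_ball hw)⟩

lemma norm_lt_two_of_mem (hz : z.re ∈ Ioo 0 1) (hz_im : z.im ∈ Ioo 0 1) : ‖z‖ < 2 := by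
  have h := norm_le_abs_re_add_abs_im z
  rw [abs_of_pos hz.1, abs_of_pos hz_im.1] at h
  linarith [hz.2, hz_im.2]

lemma im_le_norm_sub (hζ : ζ.im < 0) (z : ℂ) : z.im ≤ ‖ζ - z‖ := by
  have h := (abs_le.1 (abs_im_le_norm (ζ - z))).1
  rw [sub_im] at h
  linarith

lemma norm_far_integrand_le (hν : ∀ w, ‖ν w‖ ≤ 1) (hz : ‖z‖ ≤ 2)
    (hζ : ζ ∉ Metric.ball 0 4) :
    ‖ν ζ * (((ζ - z) ^ 2)⁻¹ - (ζ ^ 2)⁻¹)‖ ≤ 96 * (1 + ‖ζ‖) ^ (-3 : ℝ) := by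
  have hζ4 : 4 ≤ ‖ζ‖ := by simpa using hζ
  have inv_le : ‖ζ‖⁻¹ ≤ 2 * (1 + ‖ζ‖)⁻¹ := by
    rw [inv_le_comm₀ (by positivity) (by positivity), mul_inv, inv_inv]
    linarith
  calc ‖ν ζ * (((ζ - z) ^ 2)⁻¹ - (ζ ^ 2)⁻¹)‖
      ≤ ‖((ζ - z) ^ 2)⁻¹ - (ζ ^ 2)⁻¹‖ := by
        rw [norm_mul]
        exact mul_le_of_le_one_left (norm_nonneg _) (hν ζ)
    _ ≤ 6 * ‖z‖ * ‖ζ‖⁻¹ ^ 3 := norm_inv_sq_sub_inv_sq_le (by linarith)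
    _ ≤ 6 * 2 * (2 * (1 + ‖ζ‖)⁻¹) ^ 3 := by gcongr
    _ = 96 * (1 + ‖ζ‖) ^ (-3 : ℝ) := by
        rw [Real.rpow_neg (by positivity), mul_pow, inv_pow, ← Real.rpow_natCast]
        simp only [Nat.cast_ofNat, Real.rpow_ofNat]
        ring

lemma integrableOn_far_integrand (hν : Measurable ν) (hν_le : ∀ w, ‖ν w‖ ≤ 1) (hz : ‖z‖ ≤ 2) :
    IntegrableOn (fun ζ ↦ ν ζ * (((ζ - z) ^ 2)⁻¹ - (ζ ^ 2)⁻¹))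
      ({ζ | ζ.im < 0} \ Metric.ball 0 4) :=
  Integrable.mono' (integrable_one_add_norm_rpow_neg_three.const_mul 96).integrableOn
    (Measurable.aestronglyMeasurable (by fun_prop))
    (ae_restrict_of_forall_mem (measurableSet_im_neg.diff measurableSet_ball)
      fun _ hζ ↦ norm_far_integrand_le hν_le hz hζ.2)

lemma norm_setIntegral_far_le (hν_le : ∀ w, ‖ν w‖ ≤ 1) (hz : ‖z‖ ≤ 2) :
    ‖∫ ζ in {ζ | ζ.im < 0} \ Metric.ball 0 4, ν ζ * (((ζ - z) ^ 2)⁻¹ - (ζ ^ 2)⁻¹)‖ ≤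
      ∫ ζ in {ζ : ℂ | ζ.im < 0} \ Metric.ball 0 4, 96 * (1 + ‖ζ‖) ^ (-3 : ℝ) :=
  norm_integral_le_of_norm_le (integrable_one_add_norm_rpow_neg_three.const_mul 96).integrableOn
    (ae_restrict_of_forall_mem (measurableSet_im_neg.diff measurableSet_ball)
      fun _ hζ ↦ norm_far_integrand_le hν_le hz hζ.2)

lemma integrableOn_lowerHalfDisk_div_sq (hν : Measurable ν) (hν_le : ∀ w, ‖ν w‖ ≤ 1)
    (hz : 0 < z.im) : IntegrableOn (fun ζ ↦ ν ζ / (ζ - z) ^ 2) lowerHalfDisk :=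
  integrableOn_div_sq hν hν_le measurableSet_lowerHalfDisk volume_lowerHalfDisk_ne_top hz
    fun _ hζ ↦ im_le_norm_sub hζ.1 z

lemma Ssharp_sub_beurlingOn_cusp (hν : Measurable ν) (hν_le : ∀ w, ‖ν w‖ ≤ 1)
    (hν_int : IntegrableOn (fun ζ ↦ ν ζ * (ζ ^ 2)⁻¹) lowerHalfDisk)
    (hz : ‖z‖ ≤ 2) (hz_im : 0 < z.im) :
    Ssharp ν z - beurlingOn cusp ν z = -(1 / (Real.pi : ℂ)) *
      ((∫ ζ in lowerHalfDisk \ cusp, ν ζ / (ζ - z) ^ 2)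
        - (∫ ζ in lowerHalfDisk, ν ζ * (ζ ^ 2)⁻¹)
        + ∫ ζ in {ζ | ζ.im < 0} \ Metric.ball 0 4, ν ζ * (((ζ - z) ^ 2)⁻¹ - (ζ ^ 2)⁻¹)) := by
  have div_int := integrableOn_lowerHalfDisk_div_sq hν hν_le hz_im
  have sub_eq : (fun ζ ↦ ν ζ * (((ζ - z) ^ 2)⁻¹ - (ζ ^ 2)⁻¹)) =
      fun ζ ↦ ν ζ / (ζ - z) ^ 2 - ν ζ * (ζ ^ 2)⁻¹ := by
    ext ζ
    rw [mul_sub, div_eq_mul_inv]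
  have near_int : IntegrableOn (fun ζ ↦ ν ζ * (((ζ - z) ^ 2)⁻¹ - (ζ ^ 2)⁻¹)) lowerHalfDisk := by
    rw [sub_eq]
    exact div_int.sub hν_int
  have near_eq : ∫ ζ in lowerHalfDisk, ν ζ * (((ζ - z) ^ 2)⁻¹ - (ζ ^ 2)⁻¹) =
      (∫ ζ in cusp, ν ζ / (ζ - z) ^ 2) + (∫ ζ in lowerHalfDisk \ cusp, ν ζ / (ζ - z) ^ 2)
        - ∫ ζ in lowerHalfDisk, ν ζ * (ζ ^ 2)⁻¹ := by
    rw [sub_eq, integral_sub div_int hν_int, setIntegral_sdiff measurableSet_cusp div_int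
      cusp_subset_lowerHalfDisk]
    ring
  have split := integral_inter_add_sdiff (s := {ζ : ℂ | ζ.im < 0}) (t := Metric.ball 0 4)
    measurableSet_ball (f := fun ζ ↦ ν ζ * (((ζ - z) ^ 2)⁻¹ - (ζ ^ 2)⁻¹)) (μ := volume) (by
      rw [← inter_union_sdiff {ζ : ℂ | ζ.im < 0} (Metric.ball 0 4)]
      exact near_int.union (integrableOn_far_integrand hν hν_le hz))
  rw [Ssharp, beurlingOn, ← mul_sub, ← split, ← lowerHalfDisk, near_eq]
  ring

lemma norm_neg_one_div_pi_le_one : ‖-(1 / (Real.pi : ℂ))‖ ≤ 1 := by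
  rw [norm_neg, norm_div, norm_one, norm_real, Real.norm_of_nonneg Real.pi_pos.le]
  exact div_le_one_of_le₀ (by linarith [Real.pi_gt_three]) Real.pi_pos.le

lemma exists_norm_Ssharp_sub_beurlingOn_cusp_le (hν : Measurable ν) (hν_le : ∀ w, ‖ν w‖ ≤ 1)
    (hν_int : IntegrableOn (fun ζ ↦ ν ζ * (ζ ^ 2)⁻¹) lowerHalfDisk) :
    ∃ A B : ℝ, ∀ z : ℂ, z.re ∈ Ioo 0 1 → z.im ∈ Ioo 0 1 →
      ‖Ssharp ν z - beurlingOn cusp ν z‖ ≤ A * edgeWeight z.re + B := by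
  refine ⟨∫ u in Metric.ball (0 : ℂ) 6, ‖u‖ ^ (-(15 / 8) : ℝ),
    ‖∫ ζ in lowerHalfDisk, ν ζ * (ζ ^ 2)⁻¹‖ +
      ∫ ζ in {ζ : ℂ | ζ.im < 0} \ Metric.ball 0 4, 96 * (1 + ‖ζ‖) ^ (-3 : ℝ),
    fun z hz_re hz_im ↦ ?_⟩
  have hz := norm_lt_two_of_mem hz_re hz_im
  have near_le : ‖∫ ζ in lowerHalfDisk \ cusp, ν ζ / (ζ - z) ^ 2‖ ≤
      edgeWeight z.re * ∫ u in Metric.ball (0 : ℂ) 6, ‖u‖ ^ (-(15 / 8) : ℝ) := by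
    refine norm_setIntegral_div_sq_le (measurableSet_lowerHalfDisk.diff measurableSet_cusp) hν_le
      hz_re (fun ζ hζ ↦ ?_)
      fun ζ hζ ↦ sq_le_norm_sub_of_notMem_cusp hζ.1.1 hζ.2 hz_re hz_im.1
    have hζ4 : ‖ζ‖ < 4 := by simpa using hζ.1.2
    rw [mem_ball_iff_norm]
    linarith [norm_sub_le ζ z]
  have far_le := norm_setIntegral_far_le hν_le hz.le
  rw [Ssharp_sub_beurlingOn_cusp hν hν_le hν_int hz.le hz_im.1, norm_mul]
  refine (mul_le_of_le_one_left (norm_nonneg _) norm_neg_one_div_pi_le_one).trans ?_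
  refine (norm_add_le_of_le ((norm_sub_le _ _).trans (add_le_add_left near_le _))
    far_le).trans_eq ?_
  ring

lemma sigma01_Ssharp_eq_sigma01_beurlingOn_cusp (hν : Measurable ν) (hν_le : ∀ w, ‖ν w‖ ≤ 1)
    (hν_int : IntegrableOn (fun ζ ↦ ν ζ * (ζ ^ 2)⁻¹) lowerHalfDisk) :
    sigma01 (Ssharp ν) = sigma01 (beurlingOn cusp ν) := by
  obtain ⟨A, B, h⟩ := exists_norm_Ssharp_sub_beurlingOn_cusp_le hν hν_le hν_int
  refine sigma01_congr_of_norm_sub_le (measurable_Ssharp hν) (measurable_beurlingOn cusp hν)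
    (memLp_edgeWeight_affine A B) fun x hx y hy ↦ ?_
  simpa using h (x + y * I) (by simpa using hx) (by simpa using hy)

-- Here `Ssharp ν z` is a junk value: its integrand is not integrable near `0`.
lemma Ssharp_eq_zero_of_not_integrableOn (hν : Measurable ν) (hν_le : ∀ w, ‖ν w‖ ≤ 1)
    (hν_int : ¬ IntegrableOn (fun ζ ↦ ν ζ * (ζ ^ 2)⁻¹) lowerHalfDisk) (hz : 0 < z.im) :
    Ssharp ν z = 0 := by
  rw [Ssharp, integral_undef, mul_zero]
  intro h_int
  apply hν_int
  have near_int : IntegrableOn (fun ζ ↦ ν ζ * (((ζ - z) ^ 2)⁻¹ - (ζ ^ 2)⁻¹)) lowerHalfDisk :=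
    IntegrableOn.mono_set h_int inter_subset_left
  refine ((integrableOn_lowerHalfDisk_div_sq hν hν_le hz).sub near_int).congr
    (.of_forall fun ζ ↦ ?_)
  simp only [Pi.sub_apply, div_eq_mul_inv]
  ring

lemma sigma01_Ssharp_of_not_integrableOn (hν : Measurable ν) (hν_le : ∀ w, ‖ν w‖ ≤ 1)
    (hν_int : ¬ IntegrableOn (fun ζ ↦ ν ζ * (ζ ^ 2)⁻¹) lowerHalfDisk) :
    sigma01 (Ssharp ν) = sigma01 (beurlingOn cusp 0) := by
  refine sigma01_congr_of_norm_sub_le (measurable_Ssharp hν)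
    (measurable_beurlingOn cusp measurable_const) (memLp_edgeWeight_affine 0 0) fun x _ y hy ↦ ?_
  rw [Ssharp_eq_zero_of_not_integrableOn hν hν_le hν_int (by simpa using hy.1)]
  simp [beurlingOn]

lemma sigma01_Ssharp_indicator_cusp (hν : Measurable ν) (hν_le : ∀ w, ‖ν w‖ ≤ 1) :
    sigma01 (Ssharp (cusp.indicator ν)) = sigma01 (beurlingOn cusp ν) := by
  have h_meas : Measurable (cusp.indicator ν) := hν.indicator measurableSet_cusp
  have h_le (w : ℂ) : ‖cusp.indicator ν w‖ ≤ 1 := (norm_indicator_le_norm_self ν w).trans (hν_le w)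
  have h_int : IntegrableOn (fun ζ ↦ cusp.indicator ν ζ * (ζ ^ 2)⁻¹) cusp := by
    refine integrableOn_cusp_inv_sq_norm.mono' (Measurable.aestronglyMeasurable (by fun_prop))
      (.of_forall fun ζ ↦ ?_)
    rw [norm_mul, norm_inv, norm_pow]
    exact mul_le_of_le_one_left (by positivity) (h_le ζ)
  rw [sigma01_Ssharp_eq_sigma01_beurlingOn_cusp h_meas h_le
    (h_int.of_forall_sdiff_eq_zero measurableSet_lowerHalfDisk fun ζ hζ ↦ by simp [hζ.2]),
    beurlingOn_congr measurableSet_cusp (eqOn_indicator)]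

end HalfPlane

section ExpCover

lemma expCover_ne_zero (w : ℂ) : expCover w ≠ 0 := Complex.exp_ne_zero _

lemma expCover_sub (w z : ℂ) : expCover (w - z) = expCover w / expCover z := by
  rw [expCover, mul_sub, Complex.exp_sub, expCover, expCover]

lemma norm_expCover (w : ℂ) : ‖expCover w‖ = Real.exp (2 * Real.pi * w.im) := by
  rw [expCover, norm_exp]
  simp

lemma hasDerivAt_expCover (w : ℂ) :
    HasDerivAt expCover (-(2 * Real.pi * I) * expCover w) w := by
  have h : HasDerivAt (fun w : ℂ ↦ -(2 * Real.pi * I) * w) (-(2 * Real.pi * I)) w := by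
    simpa using (hasDerivAt_id w).const_mul (-(2 * Real.pi * I))
  exact h.cexp.congr_deriv (mul_comm _ _)

lemma norm_expCover_lt_one_iff {w : ℂ} : ‖expCover w‖ < 1 ↔ w.im < 0 := by
  rw [norm_expCover, Real.exp_lt_one_iff, ← smul_eq_mul, smul_neg_iff_of_pos_left Real.two_pi_pos]

/-- The branch of the inverse of `expCover` on `ℂ \ {0}` with real part in `[0, 1)`. -/
noncomputable def expCoverInv (ζ : ℂ) : ℂ := I / (2 * Real.pi) * Complex.log (-ζ) + 1 / 2

@[fun_prop]
lemma measurable_expCoverInv : Measurable expCoverInv := by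
  unfold expCoverInv
  fun_prop

lemma expCoverInv_eq (ζ : ℂ) :
    expCoverInv ζ = ((2 * Real.pi)⁻¹ : ℝ) * (I * Complex.log (-ζ)) + (1 / 2 : ℝ) := by
  rw [expCoverInv]
  push_cast
  ring

lemma expCoverInv_re (ζ : ℂ) : (expCoverInv ζ).re = 1 / 2 - arg (-ζ) / (2 * Real.pi) := by
  rw [expCoverInv_eq, add_re, re_ofReal_mul, I_mul_re, log_im, ofReal_re]
  ring

lemma expCoverInv_im (ζ : ℂ) : (expCoverInv ζ).im = Real.log ‖ζ‖ / (2 * Real.pi) := by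
  rw [expCoverInv_eq, add_im, im_ofReal_mul, I_mul_im, log_re, ofReal_im, norm_neg]
  ring

lemma expCoverInv_re_mem_Ico (ζ : ℂ) : (expCoverInv ζ).re ∈ Ico 0 1 := by
  have arg_le : arg (-ζ) / (2 * Real.pi) ≤ 1 / 2 := by
    rw [div_le_iff₀ (by positivity)]
    linarith [arg_le_pi (-ζ)]
  have lt_arg : -(1 / 2) < arg (-ζ) / (2 * Real.pi) := by
    rw [lt_div_iff₀ (by positivity)]
    linarith [neg_pi_lt_arg (-ζ)]
  rw [expCoverInv_re]
  constructor <;> linarith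

lemma expCover_expCoverInv {ζ : ℂ} (hζ : ζ ≠ 0) : expCover (expCoverInv ζ) = ζ := by
  have exponent_eq : -(2 * Real.pi * I) * (I / (2 * Real.pi) * Complex.log (-ζ) + 1 / 2) =
      Complex.log (-ζ) - Real.pi * I := by
    have hπ : (Real.pi : ℂ) ≠ 0 := ofReal_ne_zero.2 Real.pi_ne_zero
    field_simp
    ring_nf
    rw [I_sq]
    ring
  rw [expCover, expCoverInv, exponent_eq, Complex.exp_sub, exp_log (neg_ne_zero.2 hζ), exp_pi_mul_I,
    div_neg, div_one, neg_neg]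

lemma expCoverInv_expCover {w : ℂ} (hw : w.re ∈ Ico 0 1) : expCoverInv (expCover w) = w := by
  have neg_expCover : -expCover w = Complex.exp (-(2 * Real.pi * I) * w + Real.pi * I) := by
    rw [expCover, Complex.exp_add, exp_pi_mul_I]
    ring
  have im_eq : (-(2 * Real.pi * I) * w + Real.pi * I).im = Real.pi - 2 * Real.pi * w.re := by
    simp only [neg_mul, add_im, neg_im, mul_im, mul_re, re_ofNat, ofReal_re, im_ofNat, ofReal_im,
      I_re, I_im]
    ring
  rw [expCoverInv, neg_expCover, log_exp]
  · have hπ : (Real.pi : ℂ) ≠ 0 := ofReal_ne_zero.2 Real.pi_ne_zero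
    field_simp
    ring_nf
    rw [I_sq]
    ring
  · rw [im_eq]
    nlinarith [Real.pi_pos, hw.2]
  · rw [im_eq]
    nlinarith [Real.pi_pos, hw.1]

lemma expCover_injOn : InjOn expCover {w | w.re ∈ Ico 0 1} :=
  LeftInvOn.injOn fun _ ↦ expCoverInv_expCover

end ExpCover

section BeltramiPullback

variable {μ : ℂ → ℂ} {w : ℂ}

/-- The complex phase `conj φ' / φ'` for `φ = expCover`. -/
noncomputable def expCoverPhase (w : ℂ) : ℂ := -(starRingEnd ℂ (expCover w) / expCover w)

@[fun_prop]
lemma measurable_expCoverPhase : Measurable expCoverPhase := by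
  have h : Measurable fun w ↦ starRingEnd ℂ (expCover w) :=
    continuous_conj.measurable.comp measurable_expCover
  unfold expCoverPhase
  fun_prop

lemma norm_expCoverPhase (w : ℂ) : ‖expCoverPhase w‖ = 1 := by
  rw [expCoverPhase, norm_neg, norm_div, norm_conj,
    div_self (norm_ne_zero_iff.2 (expCover_ne_zero w))]

/-- The pullback `(μ ∘ φ) conj φ' / φ'` of the Beltrami coefficient `μ` by `φ = expCover`. -/
noncomputable def beltramiPullback (μ : ℂ → ℂ) (w : ℂ) : ℂ := μ (expCover w) * expCoverPhase w

lemma measurable_beltramiPullback (hμ : Measurable μ) : Measurable (beltramiPullback μ) := by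
  unfold beltramiPullback
  fun_prop

lemma norm_beltramiPullback (μ : ℂ → ℂ) (w : ℂ) : ‖beltramiPullback μ w‖ = ‖μ (expCover w)‖ := by
  rw [beltramiPullback, norm_mul, norm_expCoverPhase, mul_one]

/-- A right inverse of `beltramiPullback` on `cusp`: the Beltrami coefficient on the unit disk that
pulls back to `ν` there. -/
noncomputable def beltramiPushforward (ν : ℂ → ℂ) (ζ : ℂ) : ℂ :=
  cusp.indicator (fun w ↦ ν w * (expCoverPhase w)⁻¹) (expCoverInv ζ)

lemma measurable_beltramiPushforward {ν : ℂ → ℂ} (hν : Measurable ν) :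
    Measurable (beltramiPushforward ν) :=
  (Measurable.indicator (by fun_prop) measurableSet_cusp).comp measurable_expCoverInv

lemma norm_beltramiPushforward_le {ν : ℂ → ℂ} (hν : ∀ w, ‖ν w‖ ≤ 1) (ζ : ℂ) :
    ‖beltramiPushforward ν ζ‖ ≤ 1 := by
  refine (norm_indicator_le_norm_self _ _).trans ?_
  rw [norm_mul, norm_inv, norm_expCoverPhase, inv_one, mul_one]
  exact hν _

lemma beltramiPushforward_eq_zero (ν : ℂ → ℂ) {ζ : ℂ} (hζ : ζ ∉ Metric.ball (0 : ℂ) 1) :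
    beltramiPushforward ν ζ = 0 := by
  refine indicator_of_notMem (fun h ↦ ?_) _
  have im_nonneg : 0 ≤ (expCoverInv ζ).im := by
    rw [expCoverInv_im]
    have := Real.log_nonneg (x := ‖ζ‖) (by simpa using hζ)
    positivity
  exact im_nonneg.not_gt (im_neg_of_mem_cusp h)

lemma beltramiPullback_beltramiPushforward (ν : ℂ → ℂ) :
    EqOn (beltramiPullback (beltramiPushforward ν)) ν cusp := fun w hw ↦ by
  have h_phase : expCoverPhase w ≠ 0 :=
    norm_ne_zero_iff.1 (by rw [norm_expCoverPhase]; exact one_ne_zero)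
  rw [beltramiPullback, beltramiPushforward, expCoverInv_expCover (Ioo_subset_Ico_self hw.1),
    indicator_of_mem hw, inv_mul_cancel_right₀ h_phase]

end BeltramiPullback

section Kernel

lemma exists_norm_sq_deriv_div_sub_inv_sq_le {K : Set ℂ} (hK : IsCompact K) {a : ℂ}
    (ha : K ∈ 𝓝 a) {f : ℂ → ℂ} (hf : DifferentiableOn ℂ f K) (hf' : deriv f a ≠ 0)
    (hne : ∀ u ∈ K, u ≠ a → f u ≠ f a) :
    ∃ C, 0 ≤ C ∧ ∀ u ∈ K, u ≠ a →
      ‖(deriv f a / (f u - f a)) ^ 2 - ((u - a) ^ 2)⁻¹‖ ≤ C * ‖u - a‖⁻¹ := by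
  have factor (g : ℂ → ℂ) (u : ℂ) : g u - g a = (u - a) * dslope g a u := by
    rw [← smul_eq_mul, sub_smul_dslope]
  have dslope_ne_zero : ∀ u ∈ K, dslope f a u ≠ 0 := fun u hu h ↦ by
    rcases eq_or_ne u a with rfl | hua
    · exact hf' (by rwa [dslope_same] at h)
    · exact hne u hu hua (sub_eq_zero.1 (by rw [factor, h, mul_zero]))
  set H : ℂ → ℂ := fun u ↦ (deriv f a / dslope f a u) ^ 2
  have H_a : H a = 1 := by simp only [H, dslope_same, div_self hf', one_pow]
  have H_diff : DifferentiableOn ℂ H K :=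
    ((differentiableOn_const _).div ((differentiableOn_dslope ha).2 hf) dslope_ne_zero).pow 2
  obtain ⟨C, hC⟩ := hK.exists_bound_of_continuousOn
    ((differentiableOn_dslope ha).2 H_diff).continuousOn
  refine ⟨C, (norm_nonneg _).trans (hC a (mem_of_mem_nhds ha)), fun u hu hua ↦ ?_⟩
  have hua' : u - a ≠ 0 := sub_ne_zero.2 hua
  have diff_eq : (deriv f a / (f u - f a)) ^ 2 - ((u - a) ^ 2)⁻¹ = dslope H a u / (u - a) :=
    calc (deriv f a / (f u - f a)) ^ 2 - ((u - a) ^ 2)⁻¹ = (H u - H a) / (u - a) ^ 2 := by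
          rw [factor, H_a]
          simp only [H]
          field_simp [dslope_ne_zero u hu]
      _ = dslope H a u / (u - a) := by
          rw [factor]
          field_simp
  rw [diff_eq, norm_div, div_eq_mul_inv]
  gcongr
  exact hC u hu

/-- The kernel that replaces `u⁻²`, for `u = z - w`, when a Beurling transform on the disk is
evaluated at `φ z` and integrated over `φ w`, where `φ = expCover`. It is normalized to be
`u⁻² + O(u⁻¹)` at `0`. -/
noncomputable def expKernel (u : ℂ) : ℂ := (-(2 * Real.pi * I) / (expCover u - 1)) ^ 2

lemma measurable_expKernel : Measurable expKernel := by
  unfold expKernel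
  fun_prop

lemma expCover_ne_one {u : ℂ} (hu : |u.re| ≤ 1 / 2) (hu0 : u ≠ 0) : expCover u ≠ 1 := fun h ↦ by
  obtain ⟨n, hn⟩ := exp_eq_one_iff.1 h
  have u_eq : u = (-n : ℤ) := by
    have : (2 * Real.pi * I : ℂ) * (u + n) = 0 := by linear_combination -hn
    rcases mul_eq_zero.1 this with h | h
    · exact absurd h two_pi_I_ne_zero
    · push_cast
      linear_combination h
  have n_eq : -n = 0 := by
    rw [u_eq, intCast_re] at hu
    exact Int.abs_lt_one_iff.1 (by exact_mod_cast hu.trans_lt (by norm_num : (1 / 2 : ℝ) < 1))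
  exact hu0 (by rw [u_eq, n_eq, Int.cast_zero])

lemma exists_norm_expKernel_sub_inv_sq_le :
    ∃ C, 0 ≤ C ∧ ∀ u : ℂ, |u.re| ≤ 1 / 2 → |u.im| ≤ 2 → u ≠ 0 →
      ‖expKernel u - (u ^ 2)⁻¹‖ ≤ C * ‖u‖⁻¹ := by
  have expCover_zero : expCover 0 = 1 := by rw [expCover, mul_zero, Complex.exp_zero]
  have deriv_eq : deriv expCover 0 = -(2 * Real.pi * I) := by
    rw [(hasDerivAt_expCover 0).deriv, expCover_zero, mul_one]
  have nhds_zero : Icc (-(1 / 2)) (1 / 2) ×ℂ Icc (-2) 2 ∈ 𝓝 (0 : ℂ) :=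
    inter_mem (continuous_re.continuousAt (Icc_mem_nhds (by norm_num) (by norm_num)))
      (continuous_im.continuousAt (Icc_mem_nhds (by norm_num) (by norm_num)))
  obtain ⟨C, hC_nonneg, hC⟩ := exists_norm_sq_deriv_div_sub_inv_sq_le
    (isCompact_Icc.reProdIm isCompact_Icc) nhds_zero (f := expCover)
    (fun u _ ↦ (hasDerivAt_expCover u).differentiableAt.differentiableWithinAt)
    (by rw [deriv_eq]; exact neg_ne_zero.2 two_pi_I_ne_zero)
    fun u hu hu0 ↦ by rw [expCover_zero]; exact expCover_ne_one (abs_le.2 hu.1) hu0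
  refine ⟨C, hC_nonneg, fun u hu_re hu_im hu0 ↦ ?_⟩
  simpa only [expKernel, deriv_eq, expCover_zero, sub_zero] using
    hC u ⟨abs_le.1 hu_re, abs_le.1 hu_im⟩ hu0

end Kernel

section ChangeOfVariables

lemma abs_det_restrictScalars_toSpanSingleton (a : ℂ) :
    |((ContinuousLinearMap.toSpanSingleton ℂ a).restrictScalars ℝ).det| = ‖a‖ ^ 2 := by
  have det_eq : ((ContinuousLinearMap.toSpanSingleton ℂ a).restrictScalars ℝ).det = ‖a‖ ^ 2 := by
    rw [Complex.sq_norm, ← Algebra.norm_complex_apply, Algebra.norm_apply,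
      ContinuousLinearMap.det]
    congr 1
    ext x
    simp [mul_comm]
  rw [det_eq, abs_of_nonneg (by positivity)]

lemma setIntegral_image_eq_integral_norm_deriv_sq_smul {F : Type*} [NormedAddCommGroup F]
    [NormedSpace ℝ F] {s : Set ℂ} (hs : MeasurableSet s) {φ φ' : ℂ → ℂ}
    (hφ : ∀ w ∈ s, HasDerivWithinAt φ (φ' w) s w) (hinj : InjOn φ s) (f : ℂ → F) :
    ∫ ζ in φ '' s, f ζ = ∫ w in s, ‖φ' w‖ ^ 2 • f (φ w) := by
  rw [integral_image_eq_integral_abs_det_fderiv_smul volume hs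
    (fun w hw ↦ (hφ w hw).hasFDerivWithinAt.restrictScalars ℝ) hinj]
  simp_rw [abs_det_restrictScalars_toSpanSingleton]

lemma norm_sq_deriv_mul_div_sq (μ : ℂ → ℂ) {w z : ℂ} (h : expCover w ≠ expCover z) :
    ‖-(2 * Real.pi * I) * expCover w‖ ^ 2 • (μ (expCover w) / (expCover w - expCover z) ^ 2) =
      beltramiPullback μ w * expKernel (z - w) := by
  have norm_sq_eq : ((‖-(2 * Real.pi * I) * expCover w‖ ^ 2 : ℝ) : ℂ) =
      -(2 * Real.pi * I) ^ 2 * (expCover w * starRingEnd ℂ (expCover w)) := by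
    rw [mul_conj, normSq_eq_norm_sq, norm_mul, mul_pow]
    simp only [norm_neg, norm_mul, norm_ofNat, norm_real, Real.norm_eq_abs, norm_I, mul_pow, sq_abs]
    push_cast
    rw [I_sq]
    ring
  have hw := expCover_ne_zero w
  have h_sub : expCover w - expCover z ≠ 0 := sub_ne_zero.2 h
  have kernel_eq : expCover (z - w) - 1 = -(expCover w - expCover z) / expCover w := by
    rw [expCover_sub, div_sub_one hw, neg_sub]
  rw [real_smul, norm_sq_eq, beltramiPullback, expCoverPhase, expKernel, kernel_eq]
  field_simp

end ChangeOfVariables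

section Distance

variable {w z ζ : ℂ}

lemma norm_one_sub_div_norm_le (u : ℂ) : ‖1 - u / ‖u‖‖ ≤ 2 * ‖1 - u‖ := by
  rcases eq_or_ne u 0 with rfl | hu
  · simp
  have hu' : (‖u‖ : ℂ) ≠ 0 := ofReal_ne_zero.2 (norm_ne_zero_iff.2 hu)
  have radial_le : ‖u - u / ‖u‖‖ ≤ ‖1 - u‖ :=
    calc ‖u - u / ‖u‖‖ = ‖(u / ‖u‖) * ((‖u‖ - ‖(1 : ℂ)‖ : ℝ) : ℂ)‖ := by
          congr 1
          rw [norm_one]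
          push_cast
          field_simp
      _ = |‖u‖ - ‖(1 : ℂ)‖| := by
          rw [norm_mul, norm_div, norm_real, norm_real, norm_norm,
            div_self (norm_ne_zero_iff.2 hu), one_mul, Real.norm_eq_abs]
      _ ≤ ‖1 - u‖ := by
          rw [norm_sub_rev]
          exact abs_norm_sub_norm_le u 1
  linarith [norm_sub_le_norm_sub_add_norm_sub 1 u (u / ‖u‖)]

lemma two_mul_le_sin_pi_mul {a t : ℝ} (ha : 0 ≤ a) (hat : a ≤ t) (hta : t ≤ 1 - a) :
    2 * a ≤ Real.sin (Real.pi * t) := by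
  have hπ := Real.pi_pos
  have of_le_half {t : ℝ} (hat : a ≤ t) (ht : t ≤ 1 / 2) : 2 * a ≤ Real.sin (Real.pi * t) :=
    calc 2 * a ≤ 2 / Real.pi * (Real.pi * t) := by
          rw [← mul_assoc, div_mul_cancel₀ _ hπ.ne']
          linarith
      _ ≤ Real.sin (Real.pi * t) :=
          Real.mul_le_sin (mul_nonneg hπ.le (ha.trans hat)) (by nlinarith)
  rcases le_total t (1 / 2) with ht | ht
  · exact of_le_half hat ht
  · rw [← Real.sin_pi_sub, ← mul_one_sub]
    exact of_le_half (by linarith) (by linarith)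

lemma norm_one_sub_expCover_ofReal (t : ℝ) :
    ‖1 - expCover t‖ = 2 * |Real.sin (Real.pi * t)| := by
  have expCover_eq : expCover t = Complex.exp (I * (-(2 * (Real.pi * t)) : ℝ)) := by
    rw [expCover]
    push_cast
    ring_nf
  rw [norm_sub_rev, expCover_eq, norm_exp_I_mul_ofReal_sub_one, norm_mul, neg_div,
    mul_div_cancel_left₀ _ two_ne_zero, Real.sin_neg, norm_neg, Real.norm_ofNat, Real.norm_eq_abs]

lemma le_norm_one_sub_expCover {u : ℂ} {a : ℝ} (ha : 0 ≤ a) (h_le : a ≤ |u.re|)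
    (h_ge : |u.re| ≤ 1 - a) : a ≤ ‖1 - expCover u‖ := by
  have div_norm_eq : expCover u / ‖expCover u‖ = expCover u.re := by
    rw [norm_expCover, expCover, ofReal_exp, ← Complex.exp_sub, expCover]
    congr 1
    push_cast
    linear_combination (2 * Real.pi * I) * re_add_im u - 2 * Real.pi * u.im * I_sq
  have sin_le : Real.sin (Real.pi * |u.re|) ≤ |Real.sin (Real.pi * u.re)| := by
    rcases abs_choice u.re with h | h <;> rw [h]
    · exact le_abs_self _
    · rw [mul_neg, Real.sin_neg]
      exact neg_le_abs _
  have norm_le := norm_one_sub_div_norm_le (expCover u)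
  rw [div_norm_eq, norm_one_sub_expCover_ofReal] at norm_le
  linarith [two_mul_le_sin_pi_mul ha h_le h_ge]

lemma norm_one_sub_expCover_sub_le (hz : 0 ≤ z.im) :
    ‖1 - expCover (w - z)‖ ≤ ‖expCover w - expCover z‖ := by
  have one_le : 1 ≤ ‖expCover z‖ := by
    rw [norm_expCover]
    exact Real.one_le_exp (mul_nonneg Real.two_pi_pos.le hz)
  rw [expCover_sub, one_sub_div (expCover_ne_zero z), norm_div, norm_sub_rev]
  exact div_le_self (norm_nonneg _) one_le

lemma le_norm_sub_expCover_of_im_le {a : ℝ} (ha : 0 ≤ a) (ha' : a ≤ 1 / 2) (hw : w.im ≤ -a)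
    (hz : 0 ≤ z.im) : a ≤ ‖expCover w - expCover z‖ := by
  have norm_w_le : ‖expCover w‖ ≤ 1 - a :=
    calc ‖expCover w‖ ≤ Real.exp (-(2 * a)) := by
          rw [norm_expCover, Real.exp_le_exp]
          nlinarith [Real.pi_gt_three]
      _ ≤ (1 + 2 * a)⁻¹ := by
          rw [Real.exp_neg]
          gcongr
          linarith [Real.add_one_le_exp (2 * a)]
      _ ≤ 1 - a := by
          rw [inv_le_iff_one_le_mul₀ (by linarith)]
          nlinarith
  have one_le : 1 ≤ ‖expCover z‖ := by
    rw [norm_expCover]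
    exact Real.one_le_exp (mul_nonneg Real.two_pi_pos.le hz)
  linarith [norm_sub_norm_le (expCover z) (expCover w), norm_sub_rev (expCover z) (expCover w)]

/-- The part of `cusp` lying within half a period of the vertical line `re w = x`. -/
def cuspNear (x : ℝ) : Set ℂ := cusp ∩ {w | |w.re - x| ≤ 1 / 2}

lemma measurableSet_cuspNear (x : ℝ) : MeasurableSet (cuspNear x) :=
  measurableSet_cusp.inter (measurableSet_le (by fun_prop) measurable_const)

lemma cuspNear_subset_cusp (x : ℝ) : cuspNear x ⊆ cusp := inter_subset_left

lemma sq_le_norm_sub_expCover_of_notMem_image (hζ : ‖ζ‖ < 1) (hz : z.re ∈ Ioo 0 1)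
    (hz_im : 0 < z.im) (hζ_near : ζ ∉ expCover '' cuspNear z.re) :
    (z.re * (1 - z.re)) ^ 2 ≤ ‖ζ - expCover z‖ := by
  set x := z.re
  obtain ⟨hx0, hx1⟩ := hz
  have hρ : 0 < x * (1 - x) := mul_pos hx0 (sub_pos.2 hx1)
  have hρ_le : x * (1 - x) ≤ 1 / 4 := by nlinarith [sq_nonneg (x - 1 / 2)]
  have hρ_sq_le : (x * (1 - x)) ^ 2 ≤ x * (1 - x) := by nlinarith
  have hρ_sq_le_sq : (x * (1 - x)) ^ 2 ≤ x ^ 2 := by gcongr; nlinarith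
  rcases eq_or_ne ζ 0 with rfl | hζ0
  · rw [zero_sub, norm_neg]
    have := not_lt.1 (norm_expCover_lt_one_iff.not.2 hz_im.not_gt)
    nlinarith
  obtain ⟨w, hw_re, rfl⟩ : ∃ w : ℂ, w.re ∈ Ico 0 1 ∧ expCover w = ζ :=
    ⟨expCoverInv ζ, expCoverInv_re_mem_Ico ζ, expCover_expCoverInv hζ0⟩
  have hw_im := norm_expCover_lt_one_iff.1 hζ
  have of_re (h_le : (x * (1 - x)) ^ 2 ≤ |w.re - x|) :
      (x * (1 - x)) ^ 2 ≤ ‖expCover w - expCover z‖ := by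
    refine (le_norm_one_sub_expCover (by positivity) (by rwa [sub_re]) ?_).trans
      (norm_one_sub_expCover_sub_le hz_im.le)
    rw [sub_re, abs_le]
    constructor <;> nlinarith [hw_re.1, hw_re.2]
  by_cases hw : w ∈ cusp
  · have h_far : 1 / 2 < |w.re - x| := not_le.1 fun h ↦ hζ_near ⟨w, ⟨hw, h⟩, rfl⟩
    exact of_re (by linarith)
  rcases le_or_gt w.re (x * (1 - x)) with h_left | h_left
  · exact of_re (le_abs.2 (.inr (by linarith)))
  have h_below : w.im ≤ -w.re ^ 2 := by
    by_contra! h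
    exact hw ⟨⟨hρ.trans h_left, hw_re.2⟩, h, hw_im⟩
  exact le_norm_sub_expCover_of_im_le (by positivity) (by linarith) (by nlinarith) hz_im.le

end Distance

section Disk

variable {μ : ℂ → ℂ} {z : ℂ}

lemma expCover_injOn_cuspNear (x : ℝ) : InjOn expCover (cuspNear x) :=
  expCover_injOn.mono fun _ hw ↦ mem_preimage.2 (Ioo_subset_Ico_self hw.1.1)

lemma measurableSet_image_cuspNear (x : ℝ) : MeasurableSet (expCover '' cuspNear x) :=
  (measurableSet_cuspNear x).image_of_continuousOn_injOn
    (fun w _ ↦ (hasDerivAt_expCover w).continuousAt.continuousWithinAt)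
    (expCover_injOn_cuspNear x)

lemma image_cuspNear_subset_ball (x : ℝ) : expCover '' cuspNear x ⊆ Metric.ball 0 1 := by
  rintro _ ⟨w, hw, rfl⟩
  exact mem_ball_zero_iff.2 (norm_expCover_lt_one_iff.2 (im_neg_of_mem_cusp hw.1))

lemma ne_of_mem_cuspNear {x : ℝ} {w : ℂ} (hw : w ∈ cuspNear x) (hz : 0 < z.im) : z - w ≠ 0 := by
  refine sub_ne_zero.2 fun h ↦ ?_
  have := im_neg_of_mem_cusp hw.1
  rw [h] at hz
  exact hz.not_gt this

lemma setIntegral_image_cuspNear (μ : ℂ → ℂ) (x : ℝ) (hz : 0 < z.im) :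
    ∫ ζ in expCover '' cuspNear x, μ ζ / (ζ - expCover z) ^ 2 =
      ∫ w in cuspNear x, beltramiPullback μ w * expKernel (z - w) := by
  rw [setIntegral_image_eq_integral_norm_deriv_sq_smul (measurableSet_cuspNear x)
    (fun w _ ↦ (hasDerivAt_expCover w).hasDerivWithinAt)
    (expCover_injOn_cuspNear x)]
  refine setIntegral_congr_fun (measurableSet_cuspNear x) fun w hw ↦
    norm_sq_deriv_mul_div_sq μ fun h ↦ ?_
  have hw_lt := norm_expCover_lt_one_iff.2 (im_neg_of_mem_cusp hw.1)
  rw [h, norm_expCover_lt_one_iff] at hw_lt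
  exact hz.not_gt hw_lt

lemma exists_norm_mul_expKernel_sub_div_sq_le :
    ∃ C, 0 ≤ C ∧ ∀ τ : ℂ → ℂ, (∀ w, ‖τ w‖ ≤ 1) → ∀ z : ℂ, z.im ∈ Ioo 0 1 →
      ∀ w ∈ cuspNear z.re, ‖τ w * expKernel (z - w) - τ w / (w - z) ^ 2‖ ≤ C * ‖w - z‖⁻¹ := by
  obtain ⟨C, hC_nonneg, hC⟩ := exists_norm_expKernel_sub_inv_sq_le
  refine ⟨C, hC_nonneg, fun τ hτ z hz w hw ↦ ?_⟩
  obtain ⟨⟨hw_re, hw_im⟩, hw_near⟩ := hw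
  have re_le : |(z - w).re| ≤ 1 / 2 := by rwa [sub_re, abs_sub_comm]
  have im_le : |(z - w).im| ≤ 2 := by
    rw [sub_im, abs_le]
    constructor <;> nlinarith [hw_re.1, hw_re.2, hw_im.1, hw_im.2, hz.1, hz.2]
  calc ‖τ w * expKernel (z - w) - τ w / (w - z) ^ 2‖
      = ‖τ w‖ * ‖expKernel (z - w) - ((z - w) ^ 2)⁻¹‖ := by
        rw [← norm_mul, sub_sq_comm w z, mul_sub, div_eq_mul_inv]
    _ ≤ ‖expKernel (z - w) - ((z - w) ^ 2)⁻¹‖ := mul_le_of_le_one_left (norm_nonneg _) (hτ w)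
    _ ≤ C * ‖w - z‖⁻¹ := by
        rw [norm_sub_rev w z]
        exact hC _ re_le im_le (ne_of_mem_cuspNear ⟨⟨hw_re, hw_im⟩, hw_near⟩ hz.1)

lemma integrableOn_cusp_div_sq {τ : ℂ → ℂ} (hτ : Measurable τ) (hτ_le : ∀ w, ‖τ w‖ ≤ 1)
    (hz : 0 < z.im) : IntegrableOn (fun w ↦ τ w / (w - z) ^ 2) cusp :=
  integrableOn_div_sq hτ hτ_le measurableSet_cusp volume_cusp_ne_top hz
    fun _ hw ↦ im_le_norm_sub (im_neg_of_mem_cusp hw) z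

lemma integrableOn_cuspNear_mul_expKernel_sub {τ : ℂ → ℂ} (hτ : Measurable τ)
    (hτ_le : ∀ w, ‖τ w‖ ≤ 1) (hz : z.im ∈ Ioo 0 1) :
    IntegrableOn (fun w ↦ τ w * expKernel (z - w) - τ w / (w - z) ^ 2) (cuspNear z.re) := by
  obtain ⟨C, hC_nonneg, hC⟩ := exists_norm_mul_expKernel_sub_div_sq_le
  have h_kernel : Measurable fun w ↦ expKernel (z - w) := measurable_expKernel.comp (by fun_prop)
  refine Measure.integrableOn_of_bounded (M := C * z.im⁻¹)
    (measure_ne_top_of_subset (cuspNear_subset_cusp _) volume_cusp_ne_top)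
    (Measurable.aestronglyMeasurable (by fun_prop))
    (ae_restrict_of_forall_mem (measurableSet_cuspNear _) fun w hw ↦
      (hC τ hτ_le z hz w hw).trans ?_)
  have := hz.1
  gcongr
  exact im_le_norm_sub (im_neg_of_mem_cusp hw.1) z

lemma integrableOn_ball_div_sq_expCover (hμ : Measurable μ) (hμ_le : ∀ w, ‖μ w‖ ≤ 1)
    (hz : 0 < z.im) :
    IntegrableOn (fun ζ ↦ μ ζ / (ζ - expCover z) ^ 2) (Metric.ball (0 : ℂ) 1) := by
  have one_lt : 1 < ‖expCover z‖ := by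
    rw [norm_expCover, Real.one_lt_exp_iff]
    exact mul_pos Real.two_pi_pos hz
  refine integrableOn_div_sq hμ hμ_le measurableSet_ball measure_ball_lt_top.ne
    (sub_pos.2 one_lt) fun ζ hζ ↦ ?_
  rw [mem_ball_zero_iff] at hζ
  linarith [norm_sub_norm_le (expCover z) ζ, norm_sub_rev (expCover z) ζ]

lemma Sdisk_expCover_sub_beurlingOn_cusp (hμ : Measurable μ) (hμ_le : ∀ w, ‖μ w‖ ≤ 1)
    (hz : z.im ∈ Ioo 0 1) :
    Sdisk μ (expCover z) - beurlingOn cusp (beltramiPullback μ) z = -(1 / (Real.pi : ℂ)) *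
      ((∫ w in cuspNear z.re,
          (beltramiPullback μ w * expKernel (z - w) - beltramiPullback μ w / (w - z) ^ 2))
        - (∫ w in cusp \ cuspNear z.re, beltramiPullback μ w / (w - z) ^ 2)
        + ∫ ζ in Metric.ball 0 1 \ expCover '' cuspNear z.re, μ ζ / (ζ - expCover z) ^ 2) := by
  have hτ := measurable_beltramiPullback hμ
  have hτ_le (w : ℂ) : ‖beltramiPullback μ w‖ ≤ 1 := (norm_beltramiPullback μ w).trans_le (hμ_le _)
  have cusp_int := integrableOn_cusp_div_sq hτ hτ_le hz.1
  have near_eq : ∫ ζ in expCover '' cuspNear z.re, μ ζ / (ζ - expCover z) ^ 2 =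
      (∫ w in cuspNear z.re,
          (beltramiPullback μ w * expKernel (z - w) - beltramiPullback μ w / (w - z) ^ 2))
        + ∫ w in cuspNear z.re, beltramiPullback μ w / (w - z) ^ 2 := by
    rw [setIntegral_image_cuspNear μ _ hz.1, ← integral_add
      (integrableOn_cuspNear_mul_expKernel_sub hτ hτ_le hz)
      (cusp_int.mono_set (cuspNear_subset_cusp _))]
    simp only [sub_add_cancel]
  rw [Sdisk, beurlingOn, setIntegral_sdiff (measurableSet_cuspNear _) cusp_int
      (cuspNear_subset_cusp _),
    setIntegral_sdiff (measurableSet_image_cuspNear _)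
      (integrableOn_ball_div_sq_expCover hμ hμ_le hz.1) (image_cuspNear_subset_ball _), near_eq]
  ring

lemma exists_norm_setIntegral_mul_expKernel_sub_le :
    ∃ B, ∀ τ : ℂ → ℂ, (∀ w, ‖τ w‖ ≤ 1) → ∀ z : ℂ, z.re ∈ Ioo 0 1 → z.im ∈ Ioo 0 1 →
      ‖∫ w in cuspNear z.re, (τ w * expKernel (z - w) - τ w / (w - z) ^ 2)‖ ≤ B := by
  obtain ⟨C, hC_nonneg, hC⟩ := exists_norm_mul_expKernel_sub_div_sq_le
  refine ⟨_, fun τ hτ z hz_re hz_im ↦ norm_setIntegral_le_of_norm_le_mul_norm_rpow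
    (measurableSet_cuspNear _) (R := 4) (r := -1) (by norm_num [finrank_real_complex]) hC_nonneg
    (a := z) (fun w hw ↦ ?_) fun w hw ↦ ?_⟩
  · have hw_lt := mem_ball_zero_iff.1 (cusp_subset_ball hw.1)
    rw [mem_ball_iff_norm]
    linarith [norm_sub_le w z, norm_lt_two_of_mem hz_re hz_im]
  · rw [Real.rpow_neg_one]
    exact hC τ hτ z hz_im w hw

lemma norm_setIntegral_cusp_sdiff_le {τ : ℂ → ℂ} (hτ : ∀ w, ‖τ w‖ ≤ 1) (hz_re : z.re ∈ Ioo 0 1)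
    (hz_im : z.im ∈ Ioo 0 1) :
    ‖∫ w in cusp \ cuspNear z.re, τ w / (w - z) ^ 2‖ ≤
      edgeWeight z.re * ∫ u in Metric.ball (0 : ℂ) 4, ‖u‖ ^ (-(15 / 8) : ℝ) := by
  refine norm_setIntegral_div_sq_le (measurableSet_cusp.diff (measurableSet_cuspNear _)) hτ hz_re
    (fun w hw ↦ ?_) fun w hw ↦ ?_
  · have hw_lt := mem_ball_zero_iff.1 (cusp_subset_ball hw.1)
    rw [mem_ball_iff_norm]
    linarith [norm_sub_le w z, norm_lt_two_of_mem hz_re hz_im]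
  · have h_far : 1 / 2 < |(w - z).re| := not_le.1 fun h ↦ hw.2 ⟨hw.1, by rwa [sub_re] at h⟩
    have h_quarter : z.re * (1 - z.re) ≤ 1 / 4 := by nlinarith [sq_nonneg (z.re - 1 / 2)]
    have h_pos : 0 < z.re * (1 - z.re) := mul_pos hz_re.1 (sub_pos.2 hz_re.2)
    nlinarith [abs_re_le_norm (w - z)]

lemma norm_setIntegral_ball_sdiff_le (hμ : ∀ w, ‖μ w‖ ≤ 1) (hz_re : z.re ∈ Ioo 0 1)
    (hz_im : z.im ∈ Ioo 0 1) :
    ‖∫ ζ in Metric.ball 0 1 \ expCover '' cuspNear z.re, μ ζ / (ζ - expCover z) ^ 2‖ ≤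
      edgeWeight z.re *
        ∫ u in Metric.ball (0 : ℂ) (1 + Real.exp (2 * Real.pi)), ‖u‖ ^ (-(15 / 8) : ℝ) := by
  refine norm_setIntegral_div_sq_le (measurableSet_ball.diff (measurableSet_image_cuspNear _)) hμ
    hz_re (fun ζ hζ ↦ ?_) fun ζ hζ ↦
      sq_le_norm_sub_expCover_of_notMem_image (mem_ball_zero_iff.1 hζ.1) hz_re hz_im.1 hζ.2
  have hζ_lt := mem_ball_zero_iff.1 hζ.1
  have expCover_le : ‖expCover z‖ ≤ Real.exp (2 * Real.pi) := by
    rw [norm_expCover, Real.exp_le_exp]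
    exact mul_le_of_le_one_right Real.two_pi_pos.le hz_im.2.le
  rw [mem_ball_iff_norm]
  linarith [norm_sub_le ζ (expCover z)]

lemma exists_norm_Sdisk_expCover_sub_beurlingOn_cusp_le (hμ : Measurable μ)
    (hμ_le : ∀ w, ‖μ w‖ ≤ 1) :
    ∃ A B : ℝ, ∀ z : ℂ, z.re ∈ Ioo 0 1 → z.im ∈ Ioo 0 1 →
      ‖Sdisk μ (expCover z) - beurlingOn cusp (beltramiPullback μ) z‖ ≤
        A * edgeWeight z.re + B := by
  obtain ⟨B, near_le⟩ := exists_norm_setIntegral_mul_expKernel_sub_le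
  have hτ_le (w : ℂ) : ‖beltramiPullback μ w‖ ≤ 1 := (norm_beltramiPullback μ w).trans_le (hμ_le _)
  refine ⟨(∫ u in Metric.ball (0 : ℂ) 4, ‖u‖ ^ (-(15 / 8) : ℝ)) +
    ∫ u in Metric.ball (0 : ℂ) (1 + Real.exp (2 * Real.pi)), ‖u‖ ^ (-(15 / 8) : ℝ), B,
    fun z hz_re hz_im ↦ ?_⟩
  rw [Sdisk_expCover_sub_beurlingOn_cusp hμ hμ_le hz_im, norm_mul]
  refine (mul_le_of_le_one_left (norm_nonneg _) norm_neg_one_div_pi_le_one).trans ?_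
  refine (norm_add_le_of_le (norm_sub_le_of_le (near_le _ hτ_le z hz_re hz_im)
    (norm_setIntegral_cusp_sdiff_le hτ_le hz_re hz_im))
    (norm_setIntegral_ball_sdiff_le hμ_le hz_re hz_im)).trans_eq ?_
  ring

lemma sigmaDisk_Sdisk_eq_sigma01_beurlingOn_cusp (hμ : Measurable μ) (hμ_le : ∀ w, ‖μ w‖ ≤ 1) :
    sigmaDisk (Sdisk μ) = sigma01 (beurlingOn cusp (beltramiPullback μ)) := by
  obtain ⟨A, B, h⟩ := exists_norm_Sdisk_expCover_sub_beurlingOn_cusp_le hμ hμ_le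
  refine sigmaDisk_eq_sigma01_of_norm_sub_le (measurable_beurlingOn (Metric.ball 0 1) hμ)
    (measurable_beurlingOn cusp (measurable_beltramiPullback hμ))
    (memLp_edgeWeight_affine A B) fun x hx y hy ↦ ?_
  simpa using h (x + y * I) (by simpa using hx) (by simpa using hy)

end Disk

section Variances

lemma exists_measurable_norm_le_one_ae_eq {μ : ℂ → ℂ} (hμ : Measurable μ)
    (hμ_le : ∀ᵐ ζ : ℂ, ‖μ ζ‖ ≤ 1) :
    ∃ μ' : ℂ → ℂ, Measurable μ' ∧ (∀ ζ, ‖μ' ζ‖ ≤ 1) ∧ μ =ᵐ[volume] μ' := by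
  refine ⟨{ζ | ‖μ ζ‖ ≤ 1}.indicator μ, hμ.indicator (measurableSet_le hμ.norm measurable_const),
    fun ζ ↦ ?_, ?_⟩
  · by_cases h : ζ ∈ {ζ | ‖μ ζ‖ ≤ 1}
    · rw [indicator_of_mem h]
      exact h
    · rw [indicator_of_notMem h, norm_zero]
      exact zero_le_one
  · filter_upwards [hμ_le] with ζ h using (indicator_of_mem (s := {ζ | ‖μ ζ‖ ≤ 1}) h μ).symm

lemma Sdisk_congr_ae {μ μ' : ℂ → ℂ} (h : μ =ᵐ[volume] μ') : Sdisk μ = Sdisk μ' := by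
  ext z
  have : (fun ζ ↦ μ ζ / (ζ - z) ^ 2) =ᵐ[volume] fun ζ ↦ μ' ζ / (ζ - z) ^ 2 := by
    filter_upwards [h] with ζ hζ using by rw [hζ]
  rw [Sdisk, integral_congr_ae (ae_restrict_of_ae this), Sdisk]

lemma Ssharp_congr_ae {ν ν' : ℂ → ℂ} (h : ν =ᵐ[volume] ν') : Ssharp ν = Ssharp ν' := by
  ext z
  have : (fun ζ ↦ ν ζ * (((ζ - z) ^ 2)⁻¹ - (ζ ^ 2)⁻¹)) =ᵐ[volume]
      fun ζ ↦ ν' ζ * (((ζ - z) ^ 2)⁻¹ - (ζ ^ 2)⁻¹) := by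
    filter_upwards [h] with ζ hζ using by rw [hζ]
  rw [Ssharp, integral_congr_ae (ae_restrict_of_ae this), Ssharp]

/-- The asymptotic variances on `[0, 1]` of the Beurling transforms over `cusp` of measurable
functions bounded by `1`. -/
def cuspVariances : Set ℝ :=
  {v | ∃ ν : ℂ → ℂ, Measurable ν ∧ (∀ w, ‖ν w‖ ≤ 1) ∧ v = sigma01 (beurlingOn cusp ν)}

lemma setOf_sigmaDisk_Sdisk_eq_cuspVariances :
    {v : ℝ | ∃ μ : ℂ → ℂ, Measurable μ ∧ (∀ᵐ ζ : ℂ, ‖μ ζ‖ ≤ 1) ∧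
      (∀ ζ : ℂ, ζ ∉ Metric.ball (0 : ℂ) 1 → μ ζ = 0) ∧ v = sigmaDisk (Sdisk μ)} =
      cuspVariances := by
  ext v
  constructor
  · rintro ⟨μ, hμ, hμ_le, -, rfl⟩
    obtain ⟨μ', hμ', hμ'_le, h_ae⟩ := exists_measurable_norm_le_one_ae_eq hμ hμ_le
    refine ⟨beltramiPullback μ', measurable_beltramiPullback hμ',
      fun w ↦ (norm_beltramiPullback μ' w).trans_le (hμ'_le _), ?_⟩
    rw [Sdisk_congr_ae h_ae, sigmaDisk_Sdisk_eq_sigma01_beurlingOn_cusp hμ' hμ'_le]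
  · rintro ⟨ν, hν, hν_le, rfl⟩
    have hμ := measurable_beltramiPushforward hν
    have hμ_le := norm_beltramiPushforward_le hν_le
    refine ⟨beltramiPushforward ν, hμ, .of_forall hμ_le,
      fun ζ hζ ↦ beltramiPushforward_eq_zero ν hζ, ?_⟩
    rw [sigmaDisk_Sdisk_eq_sigma01_beurlingOn_cusp hμ hμ_le,
      beurlingOn_congr measurableSet_cusp (beltramiPullback_beltramiPushforward ν)]

lemma setOf_sigma01_Ssharp_eq_cuspVariances :
    {v : ℝ | ∃ ν : ℂ → ℂ, Measurable ν ∧ (∀ᵐ ζ : ℂ, ‖ν ζ‖ ≤ 1) ∧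
      (∀ ζ : ℂ, 0 ≤ ζ.im → ν ζ = 0) ∧ v = sigma01 (Ssharp ν)} = cuspVariances := by
  ext v
  constructor
  · rintro ⟨ν, hν, hν_le, -, rfl⟩
    obtain ⟨ν', hν', hν'_le, h_ae⟩ := exists_measurable_norm_le_one_ae_eq hν hν_le
    rw [Ssharp_congr_ae h_ae]
    by_cases h_int : IntegrableOn (fun ζ ↦ ν' ζ * (ζ ^ 2)⁻¹) lowerHalfDisk
    · exact ⟨ν', hν', hν'_le, sigma01_Ssharp_eq_sigma01_beurlingOn_cusp hν' hν'_le h_int⟩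
    · exact ⟨0, measurable_const, fun _ ↦ by simp,
        sigma01_Ssharp_of_not_integrableOn hν' hν'_le h_int⟩
  · rintro ⟨ν, hν, hν_le, rfl⟩
    refine ⟨cusp.indicator ν, hν.indicator measurableSet_cusp,
      .of_forall fun w ↦ (norm_indicator_le_norm_self ν w).trans (hν_le w),
      fun ζ hζ ↦ indicator_of_notMem (fun h ↦ hζ.not_gt (im_neg_of_mem_cusp h)) _,
      (sigma01_Ssharp_indicator_cusp hν hν_le).symm⟩

end Variances

theorem stmt3 :
    sSup {v : ℝ | ∃ μ : ℂ → ℂ, Measurable μ ∧ (∀ᵐ ζ : ℂ, ‖μ ζ‖ ≤ 1) ∧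
        (∀ ζ : ℂ, ζ ∉ Metric.ball (0:ℂ) 1 → μ ζ = 0) ∧ v = sigmaDisk (Sdisk μ)} =
      SigmaSqH := by
  rw [SigmaSqH, setOf_sigmaDisk_Sdisk_eq_cuspVariances, setOf_sigma01_Ssharp_eq_cuspVariances]
end

section
/- There exists an absolute constant C > 0 with the following property. Let μ : ℂ → ℂ be measurable, vanishing outside the lower half-plane {ζ : Im ζ < 0}, with |μ| ≤ 1 a.e. Let x ∈ ℝ, y > 0, L > 0, and suppose μ = 0 a.e. on the set Q_L(x−iy) := {w : Re w ∈ [x − e^L y, x + e^L y], Im w ∈ [−e^L y, −e^{−L} y]}. Then 2y·|Tμ(x+iy)| ≤ C·e^{−L}. -/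
open Complex MeasureTheory Filter Topology Set

/-
The kernel `|ζ - z|⁻³` is integrated over two pieces of the lower half-plane which together contain
every point outside the box `|Re ζ - x| ≤ R`, `-R ≤ Im ζ ≤ -a`: the strip `-a ≤ Im ζ < 0` and the
exterior of the disc of radius `R` about `z = x + iy`. In the strip `|ζ - z| ≥ y`, so
`|ζ - z|⁻³ ≤ 1 / (y ((Re ζ - x)² + y²))`, a multiple of the Cauchy density in `Re ζ`, and the strip
contributes at most `π a / y²`. The exterior of the disc contributes at most `2π / R`. The box `Q_L`
has `a = e^{-L} y` and `R = e^L y`.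
-/

open Metric Module ProbabilityTheory

open scoped NNReal Real

section Radial

theorem pow_sub_one_smul_rpow {n : ℕ} (hn : 0 < n) {r : ℝ} (hr : 0 < r) (s : ℝ) :
    r ^ (n - 1) • r ^ s = r ^ (n - 1 + s) := by
  rw [smul_eq_mul, ← Real.rpow_natCast, Nat.cast_pred hn, Real.rpow_add hr]

theorem preimage_sub_right_compl_closedBall_zero {E : Type*} [SeminormedAddCommGroup E] (c : E)
    (R : ℝ) : (· - c) ⁻¹' (closedBall 0 R)ᶜ = (closedBall c R)ᶜ := by
  ext x
  simp [dist_eq_norm]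

theorem indicator_compl_closedBall_fun_norm {E F : Type*} [SeminormedAddCommGroup E] [Zero F]
    (f : ℝ → F) (R : ℝ) :
    (closedBall (0 : E) R)ᶜ.indicator (fun x ↦ f ‖x‖) = fun x ↦ (Ioi R).indicator f ‖x‖ := by
  ext x
  simp [indicator]

variable {E F : Type*} [NormedAddCommGroup E] [NormedSpace ℝ E] [Nontrivial E]
  [FiniteDimensional ℝ E] [MeasurableSpace E] [BorelSpace E]
  [NormedAddCommGroup F] [NormedSpace ℝ F]
  (μ : Measure E) [μ.IsAddHaarMeasure]

theorem integrableOn_compl_closedBall_fun_norm_addHaar {f : ℝ → F} {R : ℝ} (hR : 0 ≤ R) :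
    IntegrableOn (fun x : E ↦ f ‖x‖) (closedBall 0 R)ᶜ μ ↔
      IntegrableOn (fun r ↦ r ^ (finrank ℝ E - 1) • f r) (Ioi R) := by
  rw [← integrable_indicator_iff measurableSet_closedBall.compl,
    indicator_compl_closedBall_fun_norm, integrable_fun_norm_addHaar]
  simp_rw [← indicator_smul_apply (Ioi R) (fun r : ℝ ↦ r ^ (finrank ℝ E - 1)) f]
  rw [integrableOn_indicator_iff measurableSet_Ioi, inter_eq_left.2 (Ioi_subset_Ioi hR)]

theorem setIntegral_compl_closedBall_fun_norm_addHaar (f : ℝ → F) {R : ℝ} (hR : 0 ≤ R) :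
    ∫ x in (closedBall (0 : E) R)ᶜ, f ‖x‖ ∂μ =
      finrank ℝ E • μ.real (ball 0 1) • ∫ r in Ioi R, r ^ (finrank ℝ E - 1) • f r := by
  rw [← integral_indicator measurableSet_closedBall.compl,
    indicator_compl_closedBall_fun_norm, integral_fun_norm_addHaar]
  simp_rw [← indicator_smul_apply (Ioi R) (fun r : ℝ ↦ r ^ (finrank ℝ E - 1)) f]
  rw [setIntegral_indicator measurableSet_Ioi, inter_eq_right.2 (Ioi_subset_Ioi hR)]

theorem integrableOn_compl_closedBall_norm_sub_rpow {s R : ℝ} (hs : s < -finrank ℝ E) (hR : 0 < R)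
    (c : E) : IntegrableOn (fun x ↦ ‖x - c‖ ^ s) (closedBall c R)ᶜ μ := by
  have h0 : IntegrableOn (fun x : E ↦ ‖x‖ ^ s) (closedBall 0 R)ᶜ μ := by
    rw [integrableOn_compl_closedBall_fun_norm_addHaar μ hR.le (f := fun r ↦ r ^ s)]
    have hexp : (finrank ℝ E - 1 + s : ℝ) < -1 := by linarith
    exact (integrableOn_Ioi_rpow_of_lt hexp hR).congr_fun
      (fun r hr ↦ (pow_sub_one_smul_rpow finrank_pos (hR.trans hr) s).symm) measurableSet_Ioi
  rw [← preimage_sub_right_compl_closedBall_zero]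
  exact ((measurePreserving_sub_right μ c).integrableOn_comp_preimage
    (MeasurableEquiv.subRight c).measurableEmbedding).2 h0

theorem setIntegral_compl_closedBall_norm_sub_rpow {s R : ℝ} (hs : s < -finrank ℝ E) (hR : 0 < R)
    (c : E) :
    ∫ x in (closedBall c R)ᶜ, ‖x - c‖ ^ s ∂μ =
      -(finrank ℝ E * μ.real (ball 0 1) * (R ^ (finrank ℝ E + s) / (finrank ℝ E + s))) := by
  calc ∫ x in (closedBall c R)ᶜ, ‖x - c‖ ^ s ∂μ
      = ∫ x in (closedBall (0 : E) R)ᶜ, ‖x‖ ^ s ∂μ := by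
        rw [← preimage_sub_right_compl_closedBall_zero]
        exact (measurePreserving_sub_right μ c).setIntegral_preimage_emb
          (MeasurableEquiv.subRight c).measurableEmbedding (fun x ↦ ‖x‖ ^ s) _
    _ = finrank ℝ E • μ.real (ball 0 1) • ∫ r in Ioi R, r ^ (finrank ℝ E - 1 + s) := by
        rw [setIntegral_compl_closedBall_fun_norm_addHaar μ (fun r ↦ r ^ s) hR.le]
        congr 2
        exact setIntegral_congr_fun measurableSet_Ioi fun r hr ↦
          pow_sub_one_smul_rpow finrank_pos (hR.trans hr) s
    _ = _ := by
        rw [integral_Ioi_rpow_of_lt (by linarith) hR, nsmul_eq_mul, smul_eq_mul]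
        ring_nf

end Radial

section ReProdIm

variable {𝕜 : Type*} [RCLike 𝕜] {s t : Set ℝ} {f g : ℝ → 𝕜}

theorem integrableOn_reProdIm_mul (hf : IntegrableOn f s) (hg : IntegrableOn g t) :
    IntegrableOn (fun ζ : ℂ ↦ f ζ.re * g ζ.im) (s ×ℂ t) := by
  have hprod : IntegrableOn (fun p : ℝ × ℝ ↦ f p.1 * g p.2) (s ×ˢ t) := by
    rw [IntegrableOn, Measure.volume_eq_prod, ← Measure.prod_restrict]
    exact hf.mul_prod hg
  exact (volume_preserving_equiv_real_prod.integrableOn_comp_preimage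
    measurableEquivRealProd.measurableEmbedding).2 hprod

theorem setIntegral_reProdIm_mul :
    ∫ ζ : ℂ in s ×ℂ t, f ζ.re * g ζ.im = (∫ x in s, f x) * ∫ y in t, g y := by
  rw [← setIntegral_prod_mul, ← Measure.volume_eq_prod]
  exact volume_preserving_equiv_real_prod.setIntegral_preimage_emb
    measurableEquivRealProd.measurableEmbedding (fun p : ℝ × ℝ ↦ f p.1 * g p.2) (s ×ˢ t)

end ReProdIm

theorem norm_sub_rpow_neg_three_le_cauchyPDFReal {ζ z : ℂ} {δ : ℝ≥0} (hδ : 0 < δ)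
    (h : δ ≤ |ζ.im - z.im|) :
    ‖ζ - z‖ ^ (-3 : ℝ) ≤ π / δ ^ 2 * cauchyPDFReal z.re δ ζ.re := by
  have hnorm : δ ≤ ‖ζ - z‖ := h.trans (abs_im_le_norm (ζ - z))
  have hsq : (ζ.re - z.re) ^ 2 + δ ^ 2 ≤ ‖ζ - z‖ ^ 2 := by
    rw [Complex.sq_norm, normSq_apply, sub_re, sub_im, ← sq, ← sq, ← sq_abs (ζ.im - z.im)]
    gcongr
  calc ‖ζ - z‖ ^ (-3 : ℝ) = (‖ζ - z‖ * ‖ζ - z‖ ^ 2)⁻¹ := by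
        rw [Real.rpow_neg (norm_nonneg _), ← pow_succ']
        norm_cast
    _ ≤ (δ * ((ζ.re - z.re) ^ 2 + δ ^ 2))⁻¹ := by gcongr
    _ = π / δ ^ 2 * cauchyPDFReal z.re δ ζ.re := by
        rw [cauchyPDFReal_def]
        field

section Strip

variable {z : ℂ} {δ : ℝ≥0} {t : Set ℝ}

theorem integrableOn_univ_reProdIm_cauchyPDFReal (x₀ : ℝ) (ht : volume t ≠ ⊤) :
    IntegrableOn (fun ζ : ℂ ↦ cauchyPDFReal x₀ δ ζ.re) (univ ×ℂ t) := by
  simpa only [mul_one] using integrableOn_reProdIm_mul (g := fun _ ↦ (1 : ℝ))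
    (integrable_cauchyPDFReal x₀).integrableOn (integrableOn_const ht)

theorem setIntegral_univ_reProdIm_cauchyPDFReal (x₀ : ℝ) (hδ : δ ≠ 0) :
    ∫ ζ : ℂ in univ ×ℂ t, cauchyPDFReal x₀ δ ζ.re = volume.real t := by
  simpa [integral_cauchyPDFReal_eq_one x₀ hδ] using
    setIntegral_reProdIm_mul (s := univ) (t := t) (f := cauchyPDFReal x₀ δ) (g := fun _ ↦ 1)

theorem measurableSet_reProdIm {s : Set ℝ} (hs : MeasurableSet s) (ht : MeasurableSet t) :
    MeasurableSet (s ×ℂ t) :=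
  (measurable_re hs).inter (measurable_im ht)

theorem integrableOn_univ_reProdIm_norm_sub_rpow_neg_three (hδ : 0 < δ) (ht : MeasurableSet t)
    (ht_top : volume t ≠ ⊤) (hzt : ∀ s ∈ t, δ ≤ |s - z.im|) :
    IntegrableOn (fun ζ ↦ ‖ζ - z‖ ^ (-3 : ℝ)) (univ ×ℂ t) := by
  refine ((integrableOn_univ_reProdIm_cauchyPDFReal (δ := δ) z.re ht_top).const_mul
    (π / δ ^ 2)).mono' (Measurable.aestronglyMeasurable (by fun_prop)) ?_
  filter_upwards [ae_restrict_mem (measurableSet_reProdIm .univ ht)] with ζ hζ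
  rw [Real.norm_of_nonneg (by positivity)]
  exact norm_sub_rpow_neg_three_le_cauchyPDFReal hδ (hzt _ hζ.2)

theorem setIntegral_univ_reProdIm_norm_sub_rpow_neg_three_le (hδ : 0 < δ) (ht : MeasurableSet t)
    (ht_top : volume t ≠ ⊤) (hzt : ∀ s ∈ t, δ ≤ |s - z.im|) :
    ∫ ζ in univ ×ℂ t, ‖ζ - z‖ ^ (-3 : ℝ) ≤ π / δ ^ 2 * volume.real t := by
  rw [← setIntegral_univ_reProdIm_cauchyPDFReal z.re hδ.ne', ← integral_const_mul]
  exact setIntegral_mono_on (integrableOn_univ_reProdIm_norm_sub_rpow_neg_three hδ ht ht_top hzt)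
    ((integrableOn_univ_reProdIm_cauchyPDFReal z.re ht_top).const_mul _)
    (measurableSet_reProdIm .univ ht)
    fun ζ hζ ↦ norm_sub_rpow_neg_three_le_cauchyPDFReal hδ (hzt _ hζ.2)

end Strip

section HalfPlane

variable {z : ℂ} {a R : ℝ}

theorem measurableSet_strip : MeasurableSet (univ ×ℂ Ico (-a) 0) :=
  measurableSet_reProdIm .univ measurableSet_Ico

theorem toNNReal_im_le_abs_sub (hz : 0 < z.im) {s : ℝ} (hs : s ∈ Ico (-a) 0) :
    z.im.toNNReal ≤ |s - z.im| := by
  rw [Real.coe_toNNReal _ hz.le, abs_sub_comm]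
  exact (le_sub_self_iff z.im).2 hs.2.le |>.trans (le_abs_self _)

theorem integrableOn_strip_norm_sub_rpow_neg_three (hz : 0 < z.im) :
    IntegrableOn (fun ζ ↦ ‖ζ - z‖ ^ (-3 : ℝ)) (univ ×ℂ Ico (-a) 0) :=
  integrableOn_univ_reProdIm_norm_sub_rpow_neg_three (Real.toNNReal_pos.2 hz) measurableSet_Ico
    measure_Ico_lt_top.ne fun _ ↦ toNNReal_im_le_abs_sub hz

theorem setIntegral_strip_norm_sub_rpow_neg_three_le (hz : 0 < z.im) (ha : 0 ≤ a) :
    ∫ ζ in univ ×ℂ Ico (-a) 0, ‖ζ - z‖ ^ (-3 : ℝ) ≤ π * a / z.im ^ 2 := by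
  have h := setIntegral_univ_reProdIm_norm_sub_rpow_neg_three_le (Real.toNNReal_pos.2 hz)
    measurableSet_Ico measure_Ico_lt_top.ne fun _ ↦ toNNReal_im_le_abs_sub (a := a) hz
  rwa [Real.coe_toNNReal _ hz.le, Real.volume_real_Ico_of_le (neg_nonpos.2 ha), zero_sub, neg_neg,
    div_mul_eq_mul_div] at h

theorem integrableOn_compl_closedBall_norm_sub_rpow_neg_three (hR : 0 < R) :
    IntegrableOn (fun ζ ↦ ‖ζ - z‖ ^ (-3 : ℝ)) (closedBall z R)ᶜ :=
  integrableOn_compl_closedBall_norm_sub_rpow volume (by norm_num [finrank_real_complex]) hR z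

theorem setIntegral_compl_closedBall_norm_sub_rpow_neg_three (hR : 0 < R) :
    ∫ ζ in (closedBall z R)ᶜ, ‖ζ - z‖ ^ (-3 : ℝ) = 2 * π / R := by
  have hball : volume.real (ball (0 : ℂ) 1) = π := by simp [Measure.real]
  have hexp : (2 : ℝ) + -3 = -1 := by norm_num
  rw [setIntegral_compl_closedBall_norm_sub_rpow volume (by norm_num [finrank_real_complex]) hR z,
    hball, finrank_real_complex, Nat.cast_ofNat, hexp, Real.rpow_neg_one]
  ring

theorem mem_strip_or_mem_compl_closedBall_or_mem_box {ζ : ℂ} (hz : 0 < z.im) (hζ : ζ.im < 0) :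
    ζ ∈ univ ×ℂ Ico (-a) 0 ∨ ζ ∈ (closedBall z R)ᶜ ∨
      ζ ∈ Icc (z.re - R) (z.re + R) ×ℂ Icc (-R) (-a) := by
  by_contra! ⟨hstrip, hball, hbox⟩
  rw [notMem_compl_iff, mem_closedBall, dist_eq] at hball
  have hre := abs_le.1 ((abs_re_le_norm (ζ - z)).trans hball)
  have him := abs_le.1 ((abs_im_le_norm (ζ - z)).trans hball)
  rw [sub_re] at hre
  rw [sub_im] at him
  have ha : ζ.im < -a := by
    by_contra! ha
    exact hstrip ⟨mem_univ _, ha, hζ⟩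
  exact hbox ⟨⟨by linarith, by linarith⟩, by linarith, ha.le⟩

/-- The kernel `|ζ - z|⁻³` restricted to the strip `-a ≤ Im ζ < 0`, plus its restriction to the
exterior of the disc of radius `R` about `z`. It dominates `|μ(ζ) (ζ - z)⁻³|` on the lower
half-plane when `|μ| ≤ 1` and `μ` vanishes on a box covering the part of the disc below the strip.
The overlap of the two pieces is counted twice. -/
noncomputable def kernelMajorant (z : ℂ) (a R : ℝ) (ζ : ℂ) : ℝ :=
  (univ ×ℂ Ico (-a) 0).indicator (fun ζ ↦ ‖ζ - z‖ ^ (-3 : ℝ)) ζ +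
    (closedBall z R)ᶜ.indicator (fun ζ ↦ ‖ζ - z‖ ^ (-3 : ℝ)) ζ

theorem kernelMajorant_nonneg (ζ : ℂ) : 0 ≤ kernelMajorant z a R ζ :=
  add_nonneg (indicator_nonneg (fun _ _ ↦ by positivity) _)
    (indicator_nonneg (fun _ _ ↦ by positivity) _)

theorem rpow_neg_three_le_kernelMajorant {ζ : ℂ}
    (h : ζ ∈ univ ×ℂ Ico (-a) 0 ∨ ζ ∈ (closedBall z R)ᶜ) :
    ‖ζ - z‖ ^ (-3 : ℝ) ≤ kernelMajorant z a R ζ := by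
  rcases h with h | h <;> rw [kernelMajorant, indicator_of_mem h]
  · exact le_add_of_nonneg_right (indicator_nonneg (fun _ _ ↦ by positivity) _)
  · exact le_add_of_nonneg_left (indicator_nonneg (fun _ _ ↦ by positivity) _)

theorem integrable_kernelMajorant (hz : 0 < z.im) (hR : 0 < R) :
    Integrable (kernelMajorant z a R) :=
  ((integrableOn_strip_norm_sub_rpow_neg_three hz).integrable_indicator measurableSet_strip).add
    ((integrableOn_compl_closedBall_norm_sub_rpow_neg_three hR).integrable_indicator
      measurableSet_closedBall.compl)

theorem integral_kernelMajorant_le (hz : 0 < z.im) (ha : 0 ≤ a) (hR : 0 < R) :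
    ∫ ζ, kernelMajorant z a R ζ ≤ π * a / z.im ^ 2 + 2 * π / R := by
  have hstrip := (integrableOn_strip_norm_sub_rpow_neg_three (a := a) hz).integrable_indicator
    measurableSet_strip
  have hball := (integrableOn_compl_closedBall_norm_sub_rpow_neg_three (z := z)
    hR).integrable_indicator measurableSet_closedBall.compl
  simp only [kernelMajorant]
  rw [integral_add hstrip hball, integral_indicator measurableSet_strip,
    integral_indicator measurableSet_closedBall.compl,
    setIntegral_compl_closedBall_norm_sub_rpow_neg_three hR]
  gcongr
  exact setIntegral_strip_norm_sub_rpow_neg_three_le hz ha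

variable {μ : ℂ → ℂ} {M : ℝ≥0}

theorem ae_norm_div_sub_pow_three_le_kernelMajorant (hz : 0 < z.im)
    (hM : ∀ᵐ ζ ∂volume.restrict {ζ : ℂ | ζ.im < 0}, ‖μ ζ‖ ≤ M)
    (hbox : ∀ᵐ ζ, ζ ∈ Icc (z.re - R) (z.re + R) ×ℂ Icc (-R) (-a) → μ ζ = 0) :
    ∀ᵐ ζ ∂volume.restrict {ζ : ℂ | ζ.im < 0},
      ‖μ ζ / (ζ - z) ^ 3‖ ≤ M * kernelMajorant z a R ζ := by
  have hlower : MeasurableSet {ζ : ℂ | ζ.im < 0} := measurableSet_lt measurable_im measurable_const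
  filter_upwards [hM, ae_restrict_of_ae hbox, ae_restrict_mem hlower] with ζ hζM hζbox hζ
  have hnorm : ‖μ ζ / (ζ - z) ^ 3‖ = ‖μ ζ‖ * ‖ζ - z‖ ^ (-3 : ℝ) := by
    rw [norm_div, norm_pow, div_eq_mul_inv, Real.rpow_neg (norm_nonneg _)]
    norm_cast
  rw [hnorm]
  rcases mem_strip_or_mem_compl_closedBall_or_mem_box (a := a) (R := R) hz hζ with h | h | h
  · gcongr
    exact rpow_neg_three_le_kernelMajorant (.inl h)
  · gcongr
    exact rpow_neg_three_le_kernelMajorant (.inr h)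
  · rw [hζbox h, norm_zero, zero_mul]
    exact mul_nonneg M.coe_nonneg (kernelMajorant_nonneg ζ)

theorem integrableOn_div_sub_pow_three (hz : 0 < z.im)
    (hμ : AEStronglyMeasurable μ (volume.restrict {ζ : ℂ | ζ.im < 0}))
    (hM : ∀ᵐ ζ ∂volume.restrict {ζ : ℂ | ζ.im < 0}, ‖μ ζ‖ ≤ M) :
    IntegrableOn (fun ζ ↦ μ ζ / (ζ - z) ^ 3) {ζ : ℂ | ζ.im < 0} := by
  -- The disc of radius `Im z` about `z` misses the lower half-plane, so the box may be taken empty.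
  have hempty : Icc (-z.im) (-(2 * z.im)) = ∅ := Icc_eq_empty (by linarith)
  have hbox : ∀ᵐ ζ, ζ ∈ Icc (z.re - z.im) (z.re + z.im) ×ℂ Icc (-z.im) (-(2 * z.im)) → μ ζ = 0 :=
    .of_forall fun ζ hζ ↦ (hempty ▸ hζ.2 : ζ.im ∈ (∅ : Set ℝ)).elim
  exact ((integrable_kernelMajorant hz hz).const_mul (M : ℝ)).integrableOn.mono'
    (hμ.div₀ (Measurable.aestronglyMeasurable (by fun_prop)))
    (ae_norm_div_sub_pow_three_le_kernelMajorant hz hM hbox)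

theorem norm_setIntegral_div_sub_pow_three_le (hz : 0 < z.im) (ha : 0 ≤ a) (hR : 0 < R)
    (hM : ∀ᵐ ζ ∂volume.restrict {ζ : ℂ | ζ.im < 0}, ‖μ ζ‖ ≤ M)
    (hbox : ∀ᵐ ζ, ζ ∈ Icc (z.re - R) (z.re + R) ×ℂ Icc (-R) (-a) → μ ζ = 0) :
    ‖∫ ζ in {ζ : ℂ | ζ.im < 0}, μ ζ / (ζ - z) ^ 3‖ ≤
      M * (π * a / z.im ^ 2 + 2 * π / R) := by
  have hint := (integrable_kernelMajorant (a := a) hz hR).const_mul (M : ℝ)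
  calc ‖∫ ζ in {ζ : ℂ | ζ.im < 0}, μ ζ / (ζ - z) ^ 3‖
      ≤ ∫ ζ in {ζ : ℂ | ζ.im < 0}, M * kernelMajorant z a R ζ :=
        norm_integral_le_of_norm_le hint.integrableOn
          (ae_norm_div_sub_pow_three_le_kernelMajorant hz hM hbox)
    _ ≤ ∫ ζ, M * kernelMajorant z a R ζ :=
        setIntegral_le_integral hint <|
          .of_forall fun ζ ↦ mul_nonneg M.coe_nonneg (kernelMajorant_nonneg ζ)
    _ ≤ M * (π * a / z.im ^ 2 + 2 * π / R) := by
        rw [integral_const_mul]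
        gcongr
        exact integral_kernelMajorant_le hz ha hR

end HalfPlane

theorem stmt5_general {μ : ℂ → ℂ} {M : ℝ≥0} {x y a R : ℝ} (hy : 0 < y) (ha : 0 ≤ a) (hR : 0 < R)
    (hμ : AEStronglyMeasurable μ (volume.restrict {ζ : ℂ | ζ.im < 0}))
    (hM : ∀ᵐ ζ ∂volume.restrict {ζ : ℂ | ζ.im < 0}, ‖μ ζ‖ ≤ M)
    (hbox : ∀ᵐ ζ, ζ ∈ Icc (x - R) (x + R) ×ℂ Icc (-R) (-a) → μ ζ = 0) :
    IntegrableOn (fun ζ ↦ μ ζ / (ζ - (x + y * I)) ^ 3) {ζ : ℂ | ζ.im < 0} ∧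
      2 * y * ‖Tderiv μ (x + y * I)‖ ≤ M * (4 * (a / y) + 8 * (y / R)) := by
  obtain ⟨z, rfl, rfl⟩ : ∃ z : ℂ, z.re = x ∧ z.im = y := ⟨⟨x, y⟩, rfl, rfl⟩
  rw [re_add_im]
  refine ⟨integrableOn_div_sub_pow_three hy hμ hM, ?_⟩
  have hpi : ‖-(2 / (π : ℂ))‖ = 2 / π := by
    rw [norm_neg, norm_div, Complex.norm_ofNat, Complex.norm_of_nonneg Real.pi_nonneg]
  calc 2 * z.im * ‖Tderiv μ z‖
      = 2 * z.im * (2 / π * ‖∫ ζ in {ζ : ℂ | ζ.im < 0}, μ ζ / (ζ - z) ^ 3‖) := by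
        rw [Tderiv, norm_mul, hpi]
    _ ≤ 2 * z.im * (2 / π * (M * (π * a / z.im ^ 2 + 2 * π / R))) := by
        gcongr
        exact norm_setIntegral_div_sub_pow_three_le hy ha hR hM hbox
    _ = M * (4 * (a / z.im) + 8 * (z.im / R)) := by
        field

theorem stmt5 : ∃ C : ℝ, 0 < C ∧ ∀ μ : ℂ → ℂ, Measurable μ →
    (∀ᵐ ζ : ℂ, ‖μ ζ‖ ≤ 1) → (∀ ζ : ℂ, 0 ≤ ζ.im → μ ζ = 0) →
    ∀ x y L : ℝ, 0 < y → 0 < L →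
    (∀ᵐ w : ℂ, w ∈ {w : ℂ |
        w.re ∈ Set.Icc (x - Real.exp L * y) (x + Real.exp L * y) ∧
        w.im ∈ Set.Icc (-(Real.exp L * y)) (-(Real.exp (-L) * y))} → μ w = 0) →
    2 * y * ‖Tderiv μ ((x : ℂ) + (y : ℂ) * Complex.I)‖ ≤ C * Real.exp (-L) := by
  refine ⟨12, by norm_num, fun μ hμ hμ1 _ x y L hy _ hbox ↦ ?_⟩
  have hM : ∀ᵐ ζ ∂volume.restrict {ζ : ℂ | ζ.im < 0}, ‖μ ζ‖ ≤ (1 : ℝ≥0) := ae_restrict_of_ae hμ1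
  obtain ⟨-, hT⟩ := stmt5_general hy (a := Real.exp (-L) * y) (R := Real.exp L * y)
    (by positivity) (by positivity) hμ.aestronglyMeasurable hM hbox
  exact hT.trans_eq (by rw [NNReal.coe_one, Real.exp_neg]; field)
end

section
/- Let y₀ > 0, α > 0, and let β > 0 be the positive root of β² + β = α. Suppose u : (0, y₀] → ℝ is twice continuously differentiable with u(y) ≥ 0 and u'(y) ≤ 0 for all y ∈ (0, y₀], and satisfies the differential inequality u''(y) ≤ α·u(y)/y² on (0, y₀]. If C > 0 is such that u(y₀) ≤ C·y₀^{−β} and −u'(y₀) ≤ β·C·y₀^{−β−1}, then u(y) ≤ C·y^{−β} for all y ∈ (0, y₀]. -/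
open Set

/-!
The function `w = u - C y ^ (-β)` satisfies `w'' ≤ α w / y ^ 2`, with `w ≤ 0` and `w' ≥ 0` at `y₀`.
Compare it with a power `φ = y ^ p`, where `p ≥ 0` and `p (p - 1) = α` (such as `p = β + 1`), which
is positive and nondecreasing and solves `φ'' = α φ / y ^ 2`. The Wronskian `φ w' - φ' w` has
derivative `φ w'' - φ'' w ≤ 0` and is nonnegative at `y₀`, hence nonnegative to the left of `y₀`.
Being the numerator of `(w / φ)'`, it makes `w / φ` nondecreasing, and this quotient is nonpositive
at `y₀`.

The barrier `C y ^ (-β)` itself cannot serve as `φ`: it is decreasing, and its Wronskian with `w`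
may then be negative at `y₀`.
-/

section Wronskian

/-- The Wronskian `φ w' - φ' w` of two functions `φ` and `w`, whose monotonicity drives the
comparison argument. The derivatives `φ'` and `w'` are arguments of their own, so that they may be
derivatives within a set. -/
def wronskian {X R : Type*} [Ring R] (φ φ' w w' : X → R) (x : X) : R :=
  φ x * w' x - φ' x * w x

theorem hasDerivWithinAt_wronskian {𝕜 : Type*} [NontriviallyNormedField 𝕜] {s : Set 𝕜} {x : 𝕜}
    {φ φ' w w' : 𝕜 → 𝕜} {φ'' w'' : 𝕜}
    (hφ : HasDerivWithinAt φ (φ' x) s x) (hφ' : HasDerivWithinAt φ' φ'' s x)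
    (hw : HasDerivWithinAt w (w' x) s x) (hw' : HasDerivWithinAt w' w'' s x) :
    HasDerivWithinAt (wronskian φ φ' w w') (φ x * w'' - φ'' * w x) s x :=
  ((hφ.mul hw').sub (hφ'.mul hw)).congr_deriv (by ring)

theorem hasDerivWithinAt_div_wronskian {𝕜 : Type*} [NontriviallyNormedField 𝕜] {s : Set 𝕜} {x : 𝕜}
    {φ φ' w w' : 𝕜 → 𝕜}
    (hφ : HasDerivWithinAt φ (φ' x) s x) (hw : HasDerivWithinAt w (w' x) s x) (hx : φ x ≠ 0) :
    HasDerivWithinAt (w / φ) (wronskian φ φ' w w' x / φ x ^ 2) s x :=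
  (hw.div hφ hx).congr_deriv (by rw [wronskian]; ring)

variable {s : Set ℝ} {φ φ' φ'' w w' w'' : ℝ → ℝ}

theorem antitoneOn_wronskian (hs : Convex ℝ s)
    (hφ : ∀ x ∈ s, HasDerivWithinAt φ (φ' x) s x)
    (hφ' : ∀ x ∈ s, HasDerivWithinAt φ' (φ'' x) s x)
    (hw : ∀ x ∈ s, HasDerivWithinAt w (w' x) s x)
    (hw' : ∀ x ∈ s, HasDerivWithinAt w' (w'' x) s x)
    (hle : ∀ x ∈ s, φ x * w'' x ≤ φ'' x * w x) :
    AntitoneOn (wronskian φ φ' w w') s := by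
  have hderiv : ∀ x ∈ s,
      HasDerivWithinAt (wronskian φ φ' w w') (φ x * w'' x - φ'' x * w x) s x := fun x hx =>
    hasDerivWithinAt_wronskian (hφ x hx) (hφ' x hx) (hw x hx) (hw' x hx)
  exact antitoneOn_of_hasDerivWithinAt_nonpos hs (HasDerivWithinAt.continuousOn hderiv)
    (fun x hx => (hderiv x (interior_subset hx)).mono interior_subset)
    (fun x hx => sub_nonpos.2 (hle x (interior_subset hx)))

theorem monotoneOn_div_of_wronskian_nonneg (hs : Convex ℝ s)
    (hφ : ∀ x ∈ s, HasDerivWithinAt φ (φ' x) s x)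
    (hw : ∀ x ∈ s, HasDerivWithinAt w (w' x) s x)
    (hne : ∀ x ∈ s, φ x ≠ 0) (hW : ∀ x ∈ s, 0 ≤ wronskian φ φ' w w' x) :
    MonotoneOn (w / φ) s := by
  have hderiv : ∀ x ∈ s,
      HasDerivWithinAt (w / φ) (wronskian φ φ' w w' x / φ x ^ 2) s x := fun x hx =>
    hasDerivWithinAt_div_wronskian (hφ x hx) (hw x hx) (hne x hx)
  exact monotoneOn_of_hasDerivWithinAt_nonneg hs (HasDerivWithinAt.continuousOn hderiv)
    (fun x hx => (hderiv x (interior_subset hx)).mono interior_subset)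
    (fun x hx => div_nonneg (hW x (interior_subset hx)) (sq_nonneg _))

theorem nonpos_of_mul_deriv2_le {b : ℝ} (hs : Convex ℝ s) (hb : IsGreatest s b)
    (hφ : ∀ x ∈ s, HasDerivWithinAt φ (φ' x) s x)
    (hφ' : ∀ x ∈ s, HasDerivWithinAt φ' (φ'' x) s x)
    (hw : ∀ x ∈ s, HasDerivWithinAt w (w' x) s x)
    (hw' : ∀ x ∈ s, HasDerivWithinAt w' (w'' x) s x)
    (hle : ∀ x ∈ s, φ x * w'' x ≤ φ'' x * w x)
    (hpos : ∀ x ∈ s, 0 < φ x) (hφ'b : 0 ≤ φ' b) (hwb : w b ≤ 0) (hw'b : 0 ≤ w' b) :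
    ∀ x ∈ s, w x ≤ 0 := by
  have hWb : 0 ≤ wronskian φ φ' w w' b :=
    sub_nonneg.2 <| (mul_nonpos_of_nonneg_of_nonpos hφ'b hwb).trans
      (mul_nonneg (hpos b hb.1).le hw'b)
  have hW : ∀ x ∈ s, 0 ≤ wronskian φ φ' w w' x := fun x hx =>
    hWb.trans (antitoneOn_wronskian hs hφ hφ' hw hw' hle hx hb.1 (hb.2 hx))
  have hmono : MonotoneOn (w / φ) s :=
    monotoneOn_div_of_wronskian_nonneg hs hφ hw (fun x hx => (hpos x hx).ne') hW
  intro x hx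
  have hquot : w x / φ x ≤ 0 :=
    (hmono hx hb.1 (hb.2 hx)).trans (div_nonpos_of_nonpos_of_nonneg hwb (hpos b hb.1).le)
  simpa using (div_le_iff₀ (hpos x hx)).1 hquot

end Wronskian

section Euler

theorem hasDerivAt_const_mul_rpow_sub_one (p : ℝ) {x : ℝ} (hx : x ≠ 0) :
    HasDerivAt (fun y => p * y ^ (p - 1)) (p * (p - 1) * x ^ p / x ^ 2) x := by
  refine ((Real.hasDerivAt_rpow_const (.inl hx)).const_mul p).congr_deriv ?_
  have hexp : x ^ (p - 1 - 1) = x ^ p / x ^ 2 := by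
    rw [← Real.rpow_sub_natCast hx]
    congr 1
    push_cast
    ring
  rw [hexp]
  ring

theorem exists_nonneg_mul_sub_one_eq {α : ℝ} (hα : -1 / 4 ≤ α) :
    ∃ p : ℝ, 0 ≤ p ∧ p * (p - 1) = α := by
  have hsq : √(1 + 4 * α) ^ 2 = 1 + 4 * α := Real.sq_sqrt (by linarith)
  exact ⟨(1 + √(1 + 4 * α)) / 2, by positivity, by linear_combination hsq / 4⟩

theorem nonpos_of_deriv2_le_mul_div_sq {s : Set ℝ} {b α : ℝ} {w w' w'' : ℝ → ℝ}
    (hs : Convex ℝ s) (hs₀ : s ⊆ Ioi 0) (hb : IsGreatest s b) (hα : -1 / 4 ≤ α)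
    (hw : ∀ x ∈ s, HasDerivWithinAt w (w' x) s x)
    (hw' : ∀ x ∈ s, HasDerivWithinAt w' (w'' x) s x)
    (hle : ∀ x ∈ s, w'' x ≤ α * w x / x ^ 2) (hwb : w b ≤ 0) (hw'b : 0 ≤ w' b) :
    ∀ x ∈ s, w x ≤ 0 := by
  obtain ⟨p, hp, hpα⟩ := exists_nonneg_mul_sub_one_eq hα
  have hpos : ∀ x ∈ s, 0 < x ^ p := fun x hx => Real.rpow_pos_of_pos (hs₀ hx) p
  refine nonpos_of_mul_deriv2_le hs hb
    (fun x hx => (Real.hasDerivAt_rpow_const (.inl (hs₀ hx).ne')).hasDerivWithinAt)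
    (fun x hx => (hasDerivAt_const_mul_rpow_sub_one p (hs₀ hx).ne').hasDerivWithinAt)
    hw hw' (fun x hx => ?_) hpos
    (mul_nonneg hp (Real.rpow_nonneg (hs₀ hb.1).le _)) hwb hw'b
  calc x ^ p * w'' x ≤ x ^ p * (α * w x / x ^ 2) :=
        mul_le_mul_of_nonneg_left (hle x hx) (hpos x hx).le
    _ = p * (p - 1) * x ^ p / x ^ 2 * w x := by rw [hpα]; ring

end Euler

theorem stmt7_general {y₀ α β C : ℝ} (hβα : β ^ 2 + β = α) {u u' u'' : ℝ → ℝ}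
    (hder1 : ∀ y ∈ Ioc 0 y₀, HasDerivWithinAt u (u' y) (Ioc 0 y₀) y)
    (hder2 : ∀ y ∈ Ioc 0 y₀, HasDerivWithinAt u' (u'' y) (Ioc 0 y₀) y)
    (hineq : ∀ y ∈ Ioc 0 y₀, u'' y ≤ α * u y / y ^ 2)
    (hval : u y₀ ≤ C * y₀ ^ (-β)) (hder : -u' y₀ ≤ β * C * y₀ ^ (-β - 1)) :
    ∀ y ∈ Ioc 0 y₀, u y ≤ C * y ^ (-β) := by
  intro y hy
  have hα : -1 / 4 ≤ α := by linarith [sq_nonneg (β + 1 / 2)]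
  refine sub_nonpos.1 <| nonpos_of_deriv2_le_mul_div_sq (w := fun x => u x - C * x ^ (-β))
    (convex_Ioc 0 y₀) (fun x hx => hx.1) (isGreatest_Ioc (hy.1.trans_le hy.2)) hα
    (fun x hx => (hder1 x hx).sub
      ((Real.hasDerivAt_rpow_const (.inl hx.1.ne')).const_mul C).hasDerivWithinAt)
    (fun x hx => (hder2 x hx).sub
      ((hasDerivAt_const_mul_rpow_sub_one (-β) hx.1.ne').const_mul C).hasDerivWithinAt)
    (fun x hx => ?_) (sub_nonpos.2 hval) (by linarith) y hy
  calc u'' x - C * (-β * (-β - 1) * x ^ (-β) / x ^ 2)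
      ≤ α * u x / x ^ 2 - C * (-β * (-β - 1) * x ^ (-β) / x ^ 2) :=
        sub_le_sub_right (hineq x hx) _
    _ = α * (u x - C * x ^ (-β)) / x ^ 2 := by rw [← hβα]; ring

theorem stmt7 (y₀ α β : ℝ) (hy₀ : 0 < y₀) (hα : 0 < α)
    (hβ : 0 < β) (hβα : β^2 + β = α)
    (u u' u'' : ℝ → ℝ)
    (hder1 : ∀ y ∈ Set.Ioc 0 y₀, HasDerivWithinAt u (u' y) (Set.Ioc 0 y₀) y)
    (hder2 : ∀ y ∈ Set.Ioc 0 y₀, HasDerivWithinAt u' (u'' y) (Set.Ioc 0 y₀) y)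
    (hcont : ContinuousOn u'' (Set.Ioc 0 y₀))
    (hnonneg : ∀ y ∈ Set.Ioc 0 y₀, 0 ≤ u y)
    (hdec : ∀ y ∈ Set.Ioc 0 y₀, u' y ≤ 0)
    (hineq : ∀ y ∈ Set.Ioc 0 y₀, u'' y ≤ α * u y / y^2)
    (C : ℝ) (hC : 0 < C)
    (hval : u y₀ ≤ C * y₀ ^ (-β))
    (hder : -u' y₀ ≤ β * C * y₀ ^ (-β - 1)) :
    ∀ y ∈ Set.Ioc 0 y₀, u y ≤ C * y ^ (-β) :=
  stmt7_general hβα hder1 hder2 hineq hval hder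
end

section
/- Let g be a holomorphic function on the upper half-plane ℍ = {z : Im z > 0} satisfying g(z+1) = g(z) for all z ∈ ℍ, and let p ∈ ℂ. Define I_p(y) := ∫₀¹ exp( Re(p·g(x+iy)) ) dx for y > 0. Then I_p is twice continuously differentiable on (0, ∞), with I_p'(y) = −∫₀¹ exp( Re(p·g(x+iy)) ) · Im( p·g'(x+iy) ) dx and I_p''(y) = |p|² ∫₀¹ exp( Re(p·g(x+iy)) ) · |g'(x+iy)|² dx. In particular I_p''(y) ≥ 0, i.e. I_p is convex. -/
open Complex MeasureTheory Filter Topology Set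

/-- The integral means `I_p(y) = ∫₀¹ exp(Re(p·g(x+iy))) dx`. -/
noncomputable def Ip (g : ℂ → ℂ) (p : ℂ) (y : ℝ) : ℝ :=
  ∫ x in (0:ℝ)..1, Real.exp ((p * g ((x : ℂ) + (y : ℂ) * Complex.I)).re)

/-- The claimed first derivative of `I_p`:
`I_p'(y) = −∫₀¹ exp(Re(p·g(x+iy))) · Im(p·g'(x+iy)) dx`. -/
noncomputable def Ip' (g : ℂ → ℂ) (p : ℂ) (y : ℝ) : ℝ :=
  -∫ x in (0:ℝ)..1, Real.exp ((p * g ((x : ℂ) + (y : ℂ) * Complex.I)).re) *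
      (p * deriv g ((x : ℂ) + (y : ℂ) * Complex.I)).im

/-- The claimed second derivative of `I_p`:
`I_p''(y) = |p|² ∫₀¹ exp(Re(p·g(x+iy))) · |g'(x+iy)|² dx`. -/
noncomputable def Ip'' (g : ℂ → ℂ) (p : ℂ) (y : ℝ) : ℝ :=
  ‖p‖^2 * ∫ x in (0:ℝ)..1, Real.exp ((p * g ((x : ℂ) + (y : ℂ) * Complex.I)).re) *
      ‖deriv g ((x : ℂ) + (y : ℂ) * Complex.I)‖^2

/-!
If `F` is periodic in `x` on a horizontal strip, then `∂²F/∂x²` integrates to zero over a period, so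
`d²/dy² ∫ F dx = ∫ ∂²F/∂y² dx = ∫ Δ F dx`. For `F = exp (Re h)` with `h` holomorphic, the second
derivative of `F` in the direction `v` is `F · ((Re (h' v))² + Re (h'' v²))`; adding the cases
`v = 1` and `v = i` cancels `h''` and leaves `Δ F = F · |h'|²`.
The integral means `I_p` are the case `h = p · g`.
-/

open Laplacian

section ParametricIntegral

variable {𝕜 E : Type*} [RCLike 𝕜] [NormedAddCommGroup E] [NormedSpace ℝ E] [NormedSpace 𝕜 E]

theorem hasDerivAt_intervalIntegral_of_continuousOn {f f' : 𝕜 → ℝ → E} {s : Set 𝕜} {t₀ : 𝕜}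
    {a b : ℝ} (hs : s ∈ 𝓝 t₀) (hf : ∀ t ∈ s, ContinuousOn (f t) (uIcc a b))
    (hf' : ContinuousOn (Function.uncurry f') (s ×ˢ uIcc a b))
    (hderiv : ∀ t ∈ s, ∀ x ∈ uIcc a b, HasDerivAt (fun t ↦ f t x) (f' t x) t) :
    HasDerivAt (fun t ↦ ∫ x in a..b, f t x) (∫ x in a..b, f' t₀ x) t₀ := by
  obtain ⟨K, hK, hKs, hKc⟩ := local_compact_nhds hs
  obtain ⟨C, hC⟩ := (hKc.prod (isCompact_uIcc (a := a) (b := b))).exists_bound_of_continuousOn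
    (hf'.mono (prod_mono_left hKs))
  have hf'₀ : ContinuousOn (f' t₀) (uIcc a b) :=
    hf'.comp (f := fun x ↦ (t₀, x)) (by fun_prop) fun x hx ↦ ⟨mem_of_mem_nhds hs, hx⟩
  refine (intervalIntegral.hasDerivAt_integral_of_dominated_loc_of_deriv_le
    (bound := fun _ ↦ C) hK ?_ (hf t₀ (mem_of_mem_nhds hs)).intervalIntegrable
    hf'₀.intervalIntegrable.def'.aestronglyMeasurable ?_ intervalIntegrable_const ?_).2
  · filter_upwards [hs] with t ht
    exact (hf t ht).intervalIntegrable.def'.aestronglyMeasurable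
  · exact ae_of_all _ fun x hx t ht ↦ hC (t, x) ⟨ht, uIoc_subset_uIcc hx⟩
  · exact ae_of_all _ fun x hx t ht ↦ hderiv t (hKs ht) x (uIoc_subset_uIcc hx)

end ParametricIntegral

section HorizontalIntegral

variable {E : Type*} [NormedAddCommGroup E] [NormedSpace ℝ E] {s : Set ℝ} {F : ℂ → E} {T y : ℝ}

/-- The integral `∫₀ᵀ F(x + iy) dx` of `F` along the horizontal segment of length `T` at height `y`.
For a `T`-periodic `F` this is its integral over one period. -/
noncomputable def horizontalIntegral (T : ℝ) (F : ℂ → E) (y : ℝ) : E :=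
  ∫ x in (0 : ℝ)..T, F (x + y * I)

theorem continuous_comp_horizontal {X : Type*} [TopologicalSpace X] {F : ℂ → X}
    (hF : ContinuousOn F (im ⁻¹' s)) (hy : y ∈ s) : Continuous fun x : ℝ ↦ F (x + y * I) :=
  hF.comp_continuous (by fun_prop) fun x ↦ by simpa using hy

theorem continuousOn_horizontalIntegral (hF : ContinuousOn F (im ⁻¹' s)) :
    ContinuousOn (horizontalIntegral T F) s := by
  rw [continuousOn_iff_continuous_domRestrict]
  refine intervalIntegral.continuous_parametric_intervalIntegral_of_continuous'
    (f := fun (t : s) (x : ℝ) ↦ F (x + (t : ℝ) * I)) ?_ 0 T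
  exact hF.comp_continuous (by fun_prop) fun q ↦ by simp

theorem horizontalIntegral_add {G : ℂ → E} (hF : ContinuousOn F (im ⁻¹' s))
    (hG : ContinuousOn G (im ⁻¹' s)) (hy : y ∈ s) :
    horizontalIntegral T (fun z ↦ F z + G z) y =
      horizontalIntegral T F y + horizontalIntegral T G y :=
  intervalIntegral.integral_add ((continuous_comp_horizontal hF hy).intervalIntegrable _ _)
    ((continuous_comp_horizontal hG hy).intervalIntegrable _ _)

theorem horizontalIntegral_congr {G : ℂ → E} (h : EqOn F G (im ⁻¹' s)) (hy : y ∈ s) :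
    horizontalIntegral T F y = horizontalIntegral T G y :=
  intervalIntegral.integral_congr fun x _ ↦ h (by simpa using hy)

theorem hasDerivAt_comp_horizontal {x : ℝ} (hF : DifferentiableAt ℝ F (x + y * I)) :
    HasDerivAt (fun x : ℝ ↦ F (x + y * I)) (fderiv ℝ F (x + y * I) 1) x := by
  have hline : HasDerivAt (fun x : ℝ ↦ (x : ℂ) + y * I) 1 x := by
    simpa using ofRealCLM.hasDerivAt.add_const (y * I)
  exact hF.hasFDerivAt.comp_hasDerivAt x hline

theorem hasDerivAt_comp_vertical {x : ℝ} (hF : DifferentiableAt ℝ F (x + y * I)) :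
    HasDerivAt (fun y : ℝ ↦ F (x + y * I)) (fderiv ℝ F (x + y * I) I) y := by
  have hline : HasDerivAt (fun y : ℝ ↦ (x : ℂ) + y * I) I y := by
    simpa using (ofRealCLM.hasDerivAt.mul_const I).const_add (x : ℂ)
  exact hF.hasFDerivAt.comp_hasDerivAt y hline

theorem hasDerivAt_horizontalIntegral (hs : IsOpen s) (hF : ContDiffOn ℝ 1 F (im ⁻¹' s))
    (hy : y ∈ s) :
    HasDerivAt (horizontalIntegral T F) (horizontalIntegral T (fun z ↦ fderiv ℝ F z I) y) y := by
  have hopen : IsOpen (im ⁻¹' s) := hs.preimage continuous_im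
  have hF' : ContinuousOn (fun z ↦ fderiv ℝ F z I) (im ⁻¹' s) :=
    (hF.continuousOn_fderiv_of_isOpen hopen le_rfl).clm_apply continuousOn_const
  refine hasDerivAt_intervalIntegral_of_continuousOn
    (f := fun t x : ℝ ↦ F (x + t * I)) (f' := fun t x : ℝ ↦ fderiv ℝ F (x + t * I) I)
    (hs.mem_nhds hy) (fun t ht ↦ (continuous_comp_horizontal hF.continuousOn ht).continuousOn)
    (hF'.comp (by fun_prop) fun q hq ↦ by simpa using hq.1) fun t ht x _ ↦ ?_
  exact hasDerivAt_comp_vertical ((hF.differentiableOn one_ne_zero).differentiableAt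
    (hopen.mem_nhds (by simpa using ht)))

theorem horizontalIntegral_fderiv_one_eq_zero [CompleteSpace E] (hs : IsOpen s)
    (hF : ContDiffOn ℝ 1 F (im ⁻¹' s)) (hper : ∀ z, z.im ∈ s → F (z + T) = F z) (hy : y ∈ s) :
    horizontalIntegral T (fun z ↦ fderiv ℝ F z 1) y = 0 := by
  have hopen : IsOpen (im ⁻¹' s) := hs.preimage continuous_im
  have hF' : ContinuousOn (fun z ↦ fderiv ℝ F z 1) (im ⁻¹' s) :=
    (hF.continuousOn_fderiv_of_isOpen hopen le_rfl).clm_apply continuousOn_const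
  have hderiv (x : ℝ) : HasDerivAt (fun x : ℝ ↦ F (x + y * I)) (fderiv ℝ F (x + y * I) 1) x :=
    hasDerivAt_comp_horizontal ((hF.differentiableOn one_ne_zero).differentiableAt
      (hopen.mem_nhds (by simpa using hy)))
  have hends : F ((T : ℝ) + y * I) = F ((0 : ℝ) + y * I) := by
    rw [ofReal_zero, zero_add, add_comm, hper _ (by simpa using hy)]
  rw [horizontalIntegral, intervalIntegral.integral_eq_sub_of_hasDerivAt (fun x _ ↦ hderiv x)
    ((continuous_comp_horizontal hF' hy).intervalIntegrable _ _), hends, sub_self]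

theorem fderiv_add_period (hs : IsOpen s) {c : ℂ} (hper : ∀ z, z.im ∈ s → F (z + c) = F z)
    {z : ℂ} (hz : z.im ∈ s) : fderiv ℝ F (z + c) = fderiv ℝ F z := by
  rw [← fderiv_comp_add_right]
  refine EventuallyEq.fderiv_eq ?_
  filter_upwards [(hs.preimage continuous_im).mem_nhds hz] with w hw using hper w hw

theorem laplacian_eq_fderiv_fderiv_apply {z : ℂ} (hF : DifferentiableAt ℝ (fderiv ℝ F) z) :
    Δ F z = fderiv ℝ (fun w ↦ fderiv ℝ F w 1) z 1 + fderiv ℝ (fun w ↦ fderiv ℝ F w I) z I := by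
  simp [InnerProductSpace.laplacian_eq_iteratedFDeriv_complexPlane, iteratedFDeriv_two_apply,
    fderiv_clm_apply hF (differentiableAt_const _)]

theorem hasDerivAt_horizontalIntegral_fderiv_I [CompleteSpace E] (hs : IsOpen s)
    (hF : ContDiffOn ℝ 2 F (im ⁻¹' s)) (hper : ∀ z, z.im ∈ s → F (z + T) = F z) (hy : y ∈ s) :
    HasDerivAt (horizontalIntegral T fun z ↦ fderiv ℝ F z I) (horizontalIntegral T (Δ F) y) y := by
  have hopen : IsOpen (im ⁻¹' s) := hs.preimage continuous_im
  have hdF : ContDiffOn ℝ 1 (fderiv ℝ F) (im ⁻¹' s) := hF.fderiv_of_isOpen hopen (by norm_num)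
  have hdFv (v : ℂ) : ContDiffOn ℝ 1 (fun z ↦ fderiv ℝ F z v) (im ⁻¹' s) :=
    hdF.clm_apply contDiffOn_const
  have hddFv (v : ℂ) : ContinuousOn (fun z ↦ fderiv ℝ (fun w ↦ fderiv ℝ F w v) z v) (im ⁻¹' s) :=
    ((hdFv v).continuousOn_fderiv_of_isOpen hopen le_rfl).clm_apply continuousOn_const
  have hxx : horizontalIntegral T (fun z ↦ fderiv ℝ (fun w ↦ fderiv ℝ F w 1) z 1) y = 0 :=
    horizontalIntegral_fderiv_one_eq_zero hs (hdFv 1)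
      (fun z hz ↦ by rw [fderiv_add_period hs hper hz]) hy
  have hΔ : EqOn (Δ F) (fun z ↦ fderiv ℝ (fun w ↦ fderiv ℝ F w 1) z 1 +
      fderiv ℝ (fun w ↦ fderiv ℝ F w I) z I) (im ⁻¹' s) := fun z hz ↦
    laplacian_eq_fderiv_fderiv_apply
      ((hdF.differentiableOn one_ne_zero).differentiableAt (hopen.mem_nhds hz))
  rw [horizontalIntegral_congr hΔ hy, horizontalIntegral_add (hddFv 1) (hddFv I) hy, hxx, zero_add]
  exact hasDerivAt_horizontalIntegral hs (hdFv I) hy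

end HorizontalIntegral

section ExpRe

variable {h : ℂ → ℂ} {z : ℂ}

theorem contDiffAt_exp_re {n : WithTop ℕ∞} (hh : AnalyticAt ℂ h z) :
    ContDiffAt ℝ n (fun w ↦ Real.exp (h w).re) z :=
  (reCLM.contDiff.contDiffAt.comp z (hh.contDiffAt.restrict_scalars ℝ)).exp

theorem hasFDerivAt_re (hh : DifferentiableAt ℂ h z) :
    HasFDerivAt (fun w ↦ (h w).re) (reCLM ∘L (deriv h z • (1 : ℂ →L[ℝ] ℂ))) z :=
  reCLM.hasFDerivAt.comp z hh.hasDerivAt.complexToReal_fderiv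

theorem fderiv_re_apply (hh : DifferentiableAt ℂ h z) (v : ℂ) :
    fderiv ℝ (fun w ↦ (h w).re) z v = (deriv h z * v).re := by
  simp [(hasFDerivAt_re hh).fderiv]

theorem fderiv_exp_re_apply (hh : DifferentiableAt ℂ h z) (v : ℂ) :
    fderiv ℝ (fun w ↦ Real.exp (h w).re) z v = Real.exp (h z).re * (deriv h z * v).re := by
  simp [(hasFDerivAt_re hh).exp.fderiv]

theorem fderiv_fderiv_exp_re_apply (hh : AnalyticAt ℂ h z) (v : ℂ) :
    fderiv ℝ (fun w ↦ fderiv ℝ (fun w ↦ Real.exp (h w).re) w v) z v =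
      Real.exp (h z).re * ((deriv h z * v).re ^ 2 + (deriv (deriv h) z * v ^ 2).re) := by
  have hfirst : (fun w ↦ fderiv ℝ (fun w ↦ Real.exp (h w).re) w v) =ᶠ[𝓝 z]
      fun w ↦ Real.exp (h w).re * (deriv h w * v).re := by
    filter_upwards [hh.eventually_analyticAt] with w hw
    exact fderiv_exp_re_apply hw.differentiableAt v
  have hexp := (hasFDerivAt_re hh.differentiableAt).exp
  have hderiv : DifferentiableAt ℂ (fun w ↦ deriv h w * v) z :=
    hh.deriv.differentiableAt.mul_const v
  rw [hfirst.fderiv_eq,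
    fderiv_fun_mul hexp.differentiableAt (hasFDerivAt_re hderiv).differentiableAt]
  simp only [add_apply, smul_apply, smul_eq_mul,
    fderiv_re_apply hderiv, fderiv_exp_re_apply hh.differentiableAt,
    deriv_mul_const hh.deriv.differentiableAt]
  ring_nf

theorem laplacian_exp_re (hh : AnalyticAt ℂ h z) :
    Δ (fun w ↦ Real.exp (h w).re) z = Real.exp (h z).re * ‖deriv h z‖ ^ 2 := by
  have hdiff : DifferentiableAt ℝ (fderiv ℝ fun w ↦ Real.exp (h w).re) z :=
    ((contDiffAt_exp_re hh).fderiv_right (m := 1) le_rfl).differentiableAt one_ne_zero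
  rw [laplacian_eq_fderiv_fderiv_apply hdiff, fderiv_fderiv_exp_re_apply hh,
    fderiv_fderiv_exp_re_apply hh, Complex.sq_norm, normSq_apply]
  simp only [mul_one, one_pow, mul_I_re, I_sq, mul_neg, neg_re]
  ring

end ExpRe

section IntegralMeans

variable {g : ℂ → ℂ} {s : Set ℝ} {y : ℝ}

theorem Ip'_eq_horizontalIntegral_fderiv_I (hs : IsOpen s)
    (hg : DifferentiableOn ℂ g (im ⁻¹' s)) (p : ℂ) (hy : y ∈ s) :
    Ip' g p y = horizontalIntegral 1 (fun z ↦ fderiv ℝ (fun w ↦ Real.exp (p * g w).re) z I) y := by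
  rw [Ip', ← intervalIntegral.integral_neg]
  refine intervalIntegral.integral_congr fun x _ ↦ ?_
  have hz : DifferentiableAt ℂ g (x + y * I) :=
    hg.differentiableAt ((hs.preimage continuous_im).mem_nhds (by simpa using hy))
  simp only [fderiv_exp_re_apply (hz.const_mul p), deriv_const_mul_field, mul_I_re, mul_neg]

theorem Ip''_eq_horizontalIntegral_laplacian (hs : IsOpen s)
    (hg : DifferentiableOn ℂ g (im ⁻¹' s)) (p : ℂ) (hy : y ∈ s) :
    Ip'' g p y = horizontalIntegral 1 (Δ fun w ↦ Real.exp (p * g w).re) y := by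
  rw [Ip'', ← intervalIntegral.integral_const_mul]
  refine intervalIntegral.integral_congr fun x _ ↦ ?_
  have hz : AnalyticAt ℂ (fun w ↦ p * g w) (x + y * I) :=
    (hg.const_mul p).analyticAt ((hs.preimage continuous_im).mem_nhds (by simpa using hy))
  simp only [laplacian_exp_re hz, deriv_const_mul_field, norm_mul]
  ring

theorem continuousOn_Ip'' (hs : IsOpen s) (hg : DifferentiableOn ℂ g (im ⁻¹' s)) (p : ℂ) :
    ContinuousOn (Ip'' g p) s := by
  have hg' : ContinuousOn (deriv g) (im ⁻¹' s) :=
    (hg.deriv (hs.preimage continuous_im)).continuousOn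
  have hexp : ContinuousOn (fun z ↦ Real.exp (p * g z).re) (im ⁻¹' s) :=
    (continuous_re.comp_continuousOn (continuousOn_const.mul hg.continuousOn)).rexp
  exact continuousOn_const.mul (continuousOn_horizontalIntegral (hexp.mul (hg'.norm.pow 2)))

theorem Ip''_nonneg (g : ℂ → ℂ) (p : ℂ) (y : ℝ) : 0 ≤ Ip'' g p y :=
  mul_nonneg (by positivity)
    (intervalIntegral.integral_nonneg zero_le_one fun _ _ ↦ by positivity)

end IntegralMeans

theorem stmt9_general {s : Set ℝ} (hs : IsOpen s) {g : ℂ → ℂ}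
    (hg : DifferentiableOn ℂ g (im ⁻¹' s)) (hper : ∀ z, z.im ∈ s → g (z + 1) = g z) (p : ℂ) :
    (∀ y ∈ s, HasDerivAt (Ip g p) (Ip' g p y) y) ∧
    (∀ y ∈ s, HasDerivAt (Ip' g p) (Ip'' g p y) y) ∧
    ContinuousOn (Ip'' g p) s ∧
    (∀ y ∈ s, 0 ≤ Ip'' g p y) := by
  have hsmooth : ContDiffOn ℝ 2 (fun z ↦ Real.exp (p * g z).re) (im ⁻¹' s) :=
    fun z hz ↦ (contDiffAt_exp_re ((hg.const_mul p).analyticAt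
      ((hs.preimage continuous_im).mem_nhds hz))).contDiffWithinAt
  refine ⟨fun y hy ↦ ?_, fun y hy ↦ ?_, continuousOn_Ip'' hs hg p, fun y _ ↦ Ip''_nonneg g p y⟩
  · rw [Ip'_eq_horizontalIntegral_fderiv_I hs hg p hy]
    exact hasDerivAt_horizontalIntegral hs (hsmooth.of_le one_le_two) hy
  · have hIp' : Ip' g p =ᶠ[𝓝 y] horizontalIntegral 1
        fun z ↦ fderiv ℝ (fun w ↦ Real.exp (p * g w).re) z I := by
      filter_upwards [hs.mem_nhds hy] with t ht
        using Ip'_eq_horizontalIntegral_fderiv_I hs hg p ht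
    rw [Ip''_eq_horizontalIntegral_laplacian hs hg p hy]
    exact (hasDerivAt_horizontalIntegral_fderiv_I hs hsmooth
      (fun z hz ↦ by rw [ofReal_one, hper z hz]) hy).congr_of_eventuallyEq hIp'

theorem stmt9 (g : ℂ → ℂ)
    (hg : DifferentiableOn ℂ g {z : ℂ | 0 < z.im})
    (hper : ∀ z : ℂ, 0 < z.im → g (z + 1) = g z) (p : ℂ) :
    (∀ y : ℝ, 0 < y → HasDerivAt (Ip g p) (Ip' g p y) y) ∧
    (∀ y : ℝ, 0 < y → HasDerivAt (Ip' g p) (Ip'' g p y) y) ∧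
    ContinuousOn (Ip'' g p) (Set.Ioi 0) ∧
    (∀ y : ℝ, 0 < y → 0 ≤ Ip'' g p y) :=
  stmt9_general isOpen_Ioi hg hper p
end
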